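/- arXiv:1304.6059 — 2 statements merged into one kernel-verified Lean document; each statement's English description precedes it below -/
import Mathlib

section
/- Assume that S contains the identity morphisms of all objects of A and is closed under the direct sum operation (if s, s' ∈ S then s ⊕ s' ∈ S). Then the canonical comparison functor Q : A[S⁻¹] → A[S⁻¹]_add from the Gabriel–Zisman localization of A at S to A[S⁻¹]_add is an isomorphism of categories. -/
open CategoryTheory Limits Pretriangulated ZeroObject

universe v u v' u'

section TriangulatedPrelude

variable {C : Type u} [Category.{v} C] [HasZeroObject C] [HasShift C ℤ] [Preadditive C]
  [∀ n : ℤ, (shiftFunctor C n).Additive] [Pretriangulated C]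

/-- The objects of the smallest strict full triangulated subcategory of `C`
containing the set of objects `B`. -/
inductive genSub (B : Set C) : C → Prop
  | of (X : C) (hX : X ∈ B) : genSub B X
  | zero (X : C) (hX : IsZero X) : genSub B X
  | shift (X : C) (n : ℤ) (hX : genSub B X) : genSub B (X⟦n⟧)
  | ext₂ (T : Triangle C) (hT : T ∈ distTriang C) (h₁ : genSub B T.obj₁)
      (h₃ : genSub B T.obj₃) : genSub B T.obj₂

/-- The triangulated subcategory of `C` generated by `B`. -/
def genSubcat (B : Set C) : ObjectProperty C :=
  genSub B

instance (B : Set C) : (genSubcat B).IsTriangulated where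
  exists_zero := ⟨0, isZero_zero _, genSub.zero _ (isZero_zero _)⟩
  isStableUnderShiftBy n := ⟨fun X h => genSub.shift X n h⟩
  ext₂' T hT h₁ h₃ := ObjectProperty.le_isoClosure _ _ (genSub.ext₂ T hT h₁ h₃)

/-- The extension-closure of a class of objects `E`: the smallest class containing `E`
and `0` and such that for any distinguished triangle `X ⟶ Y ⟶ Z` with `X, Z` in the
class, `Y` is also in the class. -/
inductive extClosure (E : Set C) : C → Prop
  | of (X : C) (hX : X ∈ E) : extClosure E X
  | zero (X : C) (hX : IsZero X) : extClosure E X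
  | ext₂ (T : Triangle C) (hT : T ∈ distTriang C) (h₁ : extClosure E T.obj₁)
      (h₃ : extClosure E T.obj₃) : extClosure E T.obj₂

/-- `D_{[i,j]}`: the extension-closure of `∪_{i ≤ l ≤ j} D[l]`. -/
def shiftClosure (D : Set C) (i j : ℤ) : Set C :=
  extClosure {X | ∃ (Y : C) (l : ℤ), i ≤ l ∧ l ≤ j ∧ Y ∈ D ∧ X = Y⟦l⟧}

/-- `D_{≥ i} = ∪_{k ≥ i} D_{[i,k]}`. -/
def shiftClosureGE (D : Set C) (i : ℤ) : Set C := {X | ∃ k, i ≤ k ∧ X ∈ shiftClosure D i k}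

/-- `D_{≤ j} = ∪_{k ≤ j} D_{[k,j]}`. -/
def shiftClosureLE (D : Set C) (j : ℤ) : Set C := {X | ∃ k, k ≤ j ∧ X ∈ shiftClosure D k j}

/-- A set of objects `D` is weakly negative if `0 ∈ D` and `Hom(X, Y[i]) = 0`
for all `X, Y ∈ D` and all `i ≥ 2`. -/
def WeaklyNegative (D : Set C) : Prop :=
  (0 : C) ∈ D ∧ ∀ X ∈ D, ∀ Y ∈ D, ∀ i : ℤ, 2 ≤ i → ∀ f : X ⟶ (Y⟦i⟧), f = 0

end TriangulatedPrelude

attribute [local instance] Limits.hasBinaryBiproducts_of_finite_biproducts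

section KPrelude

variable {A : Type u} [Category.{v} A] [Preadditive A] [HasZeroObject A] [HasFiniteBiproducts A]

/-- The two-term cochain complex with `P` in degree `n` and `Q` in degree `n + 1`,
with differential given by `f : P ⟶ Q` (and all other terms `0`).
In particular, `twoComplex (-1) f` is the cone of a morphism `f` of `A`. -/
noncomputable def twoComplex (n : ℤ) {P Q : A} (f : P ⟶ Q) : CochainComplex A ℤ where
  X i := if i = n then P else if i = n + 1 then Q else 0
  d i j :=
    if hij : i = n ∧ j = n + 1 then
      eqToHom (by simp [hij.1]) ≫ f ≫
        eqToHom (by simp [hij.2, show ¬ ((n : ℤ) + 1 = n) by omega])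
    else 0
  shape i j hij := by
    rw [dif_neg]
    rintro ⟨rfl, rfl⟩
    exact hij rfl
  d_comp_d' i j k _ _ := by
    by_cases h1 : i = n ∧ j = n + 1
    · by_cases h2 : j = n ∧ k = n + 1
      · obtain ⟨h1a, h1b⟩ := h1; obtain ⟨h2a, h2b⟩ := h2; omega
      · rw [dif_neg h2, comp_zero]
    · rw [dif_neg h1, zero_comp]

/-- The chain map from the two-term complex (in degrees `n`, `n + 1`) determined by
`f : P ⟶ Q` to the complex concentrated in degree `n` with value `M`, whose degree `n`
component is `g : P ⟶ M`. -/
noncomputable def twoComplexToSingle (n : ℤ) {P Q M : A} (f : P ⟶ Q) (g : P ⟶ M) :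
    twoComplex n f ⟶ (HomologicalComplex.single A (ComplexShape.up ℤ) n).obj M where
  f i :=
    if h : i = n then
      eqToHom (by simp [twoComplex, h]) ≫ g ≫
        (HomologicalComplex.singleObjXSelf (ComplexShape.up ℤ) n M).inv ≫ eqToHom (by rw [h])
    else 0
  comm' i j hij := by
    simp only [ComplexShape.up_Rel] at hij
    by_cases hj : j = n
    · have hi : ¬ (i = n ∧ j = n + 1) := by rintro ⟨rfl, rfl⟩; omega
      have hd : (twoComplex n f).d i j = 0 := by
        exact dif_neg hi
      rw [hd, zero_comp]
      have : i ≠ n := by omega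
      rw [dif_neg this, zero_comp]
    · rw [dif_neg hj]
      rw [comp_zero]
      have : ((HomologicalComplex.single A (ComplexShape.up ℤ) n).obj M).d i j = 0 := by simp
      rw [this, comp_zero]

/-- The quotient functor `C^b(A) ⥤ K(A)` (restricted from all complexes). -/
noncomputable abbrev homotopyQ : CochainComplex A ℤ ⥤ HomotopyCategory A (ComplexShape.up ℤ) :=
  HomotopyCategory.quotient A (ComplexShape.up ℤ)

/-- The canonical embedding of `A` into the homotopy category, as complexes concentrated
in degree `0`. -/
noncomputable abbrev iotaA : A ⥤ HomotopyCategory A (ComplexShape.up ℤ) :=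
  HomologicalComplex.single A (ComplexShape.up ℤ) 0 ⋙ homotopyQ

/-- `B`: the set of cones of elements of `S`, viewed in the homotopy category. -/
def coneSet (S : MorphismProperty A) : Set (HomotopyCategory A (ComplexShape.up ℤ)) :=
  {X | ∃ (P Q : A) (s : P ⟶ Q), S s ∧ X = homotopyQ.obj (twoComplex (-1) s)}

/-- The Verdier localization functor of the homotopy category by the triangulated
subcategory `𝔻` generated by the cones of elements of `S`. -/
noncomputable abbrev locQ (S : MorphismProperty A) :
    HomotopyCategory A (ComplexShape.up ℤ) ⥤ (genSubcat (coneSet S)).trW.Localization :=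
  (genSubcat (coneSet S)).trW.Q

/-- The composite functor `A ⥤ K(A) ⥤ K(A)/𝔻`. -/
noncomputable abbrev uBig (S : MorphismProperty A) :
    A ⥤ (genSubcat (coneSet S)).trW.Localization :=
  iotaA ⋙ locQ S

/-- `A[S⁻¹]_add`: the full subcategory of the Verdier quotient whose
objects are those of `A` (viewed as complexes concentrated in degree `0`). -/
def AddLoc (S : MorphismProperty A) : Type u := A

noncomputable instance (S : MorphismProperty A) : Category (AddLoc S) where
  Hom X Y := (uBig S).obj X ⟶ (uBig S).obj Y
  id X := 𝟙 ((uBig S).obj X)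
  comp f g := f ≫ g

/-- The canonical functor `u : A ⥤ A[S⁻¹]_add` induced by the localization functor. -/
noncomputable def uFun (S : MorphismProperty A) : A ⥤ AddLoc S where
  obj X := X
  map f := (uBig S).map f
  map_id X := (uBig S).map_id X
  map_comp f g := (uBig S).map_comp f g

noncomputable instance (S : MorphismProperty A) : Preadditive (AddLoc S) where
  homGroup X Y := inferInstanceAs (AddCommGroup ((uBig S).obj X ⟶ (uBig S).obj Y))
  add_comp P Q R f f' g :=
    @Preadditive.add_comp _ _ _ ((uBig S).obj P) ((uBig S).obj Q) ((uBig S).obj R) f f' g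
  comp_add P Q R f g g' :=
    @Preadditive.comp_add _ _ _ ((uBig S).obj P) ((uBig S).obj Q) ((uBig S).obj R) f g g'

end KPrelude

section Abs

set_option linter.unusedSectionVars false

variable {C : Type u} [Category.{v} C] [HasZeroObject C] [HasShift C ℤ] [Preadditive C]
  [∀ n : ℤ, (shiftFunctor C n).Additive] [Pretriangulated C]

lemma coy2 {X Y Z : C} {f : X ⟶ Y} {g : Y ⟶ Z} {h : Z ⟶ X⟦(1 : ℤ)⟧}
    (hT : Triangle.mk f g h ∈ distTriang C) {W : C} (u : W ⟶ Y) (hu : u ≫ g = 0) :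
    ∃ v : W ⟶ X, u = v ≫ f := Triangle.coyoneda_exact₂ _ hT u hu

lemma coy3 {X Y Z : C} {f : X ⟶ Y} {g : Y ⟶ Z} {h : Z ⟶ X⟦(1 : ℤ)⟧}
    (hT : Triangle.mk f g h ∈ distTriang C) {W : C} (u : W ⟶ Z) (hu : u ≫ h = 0) :
    ∃ v : W ⟶ Y, u = v ≫ g := Triangle.coyoneda_exact₃ _ hT u hu

lemma yon2 {X Y Z : C} {f : X ⟶ Y} {g : Y ⟶ Z} {h : Z ⟶ X⟦(1 : ℤ)⟧}
    (hT : Triangle.mk f g h ∈ distTriang C) {W : C} (u : Y ⟶ W) (hu : f ≫ u = 0) :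
    ∃ v : Z ⟶ W, u = g ≫ v := Triangle.yoneda_exact₂ _ hT u hu

lemma yon3 {X Y Z : C} {f : X ⟶ Y} {g : Y ⟶ Z} {h : Z ⟶ X⟦(1 : ℤ)⟧}
    (hT : Triangle.mk f g h ∈ distTriang C) {W : C} (u : Z ⟶ W) (hu : g ≫ u = 0) :
    ∃ v : X⟦(1 : ℤ)⟧ ⟶ W, u = h ≫ v := Triangle.yoneda_exact₃ _ hT u hu

lemma cmpl2 {X Y Z : C} {f : X ⟶ Y} {g : Y ⟶ Z} {h : Z ⟶ X⟦(1 : ℤ)⟧}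
    (hT : Triangle.mk f g h ∈ distTriang C)
    {X' Y' Z' : C} {f' : X' ⟶ Y'} {g' : Y' ⟶ Z'} {h' : Z' ⟶ X'⟦(1 : ℤ)⟧}
    (hT' : Triangle.mk f' g' h' ∈ distTriang C) (a : X ⟶ X') (c : Z ⟶ Z')
    (e : h ≫ a⟦(1 : ℤ)⟧' = c ≫ h') :
    ∃ b : Y ⟶ Y', f ≫ b = a ≫ f' ∧ g ≫ c = b ≫ g' :=
  complete_distinguished_triangle_morphism₂ _ _ hT hT' a c e

lemma cmpl2' {X Y Z : C} {f : X ⟶ Y} {g : Y ⟶ Z} {h : Z ⟶ X⟦(1 : ℤ)⟧}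
    (hT : Triangle.mk f g h ∈ distTriang C)
    {Y' Z' : C} {f' : X ⟶ Y'} {g' : Y' ⟶ Z'} {h' : Z' ⟶ X⟦(1 : ℤ)⟧}
    (hT' : Triangle.mk f' g' h' ∈ distTriang C) (c : Z ⟶ Z') (e : h = c ≫ h') :
    ∃ b : Y ⟶ Y', f ≫ b = f' ∧ g ≫ c = b ≫ g' := by
  obtain ⟨b, h1, h2⟩ := cmpl2 hT hT' (𝟙 X) c
    (by rw [← e, CategoryTheory.Functor.map_id]; exact Category.comp_id _)
  exact ⟨b, by rwa [Category.id_comp] at h1, h2⟩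

/-- vanishing of all degree n maps. -/
def HV (n : ℤ) (X Y : C) : Prop := ∀ f : X ⟶ Y⟦n⟧, f = 0

lemma HV.shift {n m a b : ℤ} {X Y : C} (h : HV m X Y) (e : m + a = n + b) :
    HV n (X⟦a⟧) (Y⟦b⟧) := by
  intro f
  let i1 : (Y⟦b⟧)⟦n⟧ ≅ (Y⟦m⟧)⟦a⟧ :=
    (shiftFunctorAdd' C b n (n + b) (by omega)).symm.app Y ≪≫
      (shiftFunctorAdd' C m a (n + b) (by omega)).app Y
  obtain ⟨g, hg⟩ := (shiftFunctor C a).map_surjective (f ≫ i1.hom)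
  rw [h g, Functor.map_zero] at hg
  rw [← cancel_mono i1.hom, ← hg, zero_comp]

lemma HV.zero {X Y : C} (h : HV 0 X Y) (f : X ⟶ Y) : f = 0 := by
  have := h (f ≫ (shiftFunctorZero C ℤ).inv.app Y)
  rwa [← cancel_mono ((shiftFunctorZero C ℤ).inv.app Y), zero_comp]

lemma HV.ext_left {n : ℤ} {E : Set C} {Y : C} (h : ∀ X ∈ E, HV n X Y) {X : C}
    (hX : extClosure E X) : HV n X Y := by
  induction hX with
  | of X hX => exact h X hX
  | zero X hX => exact fun f => hX.eq_of_src _ _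
  | ext₂ T hT h₁ h₃ i1 i3 =>
    intro f
    obtain ⟨g, hg⟩ := T.yoneda_exact₂ hT f (i1 _)
    rw [hg, i3 g, comp_zero]

lemma HV.ext_right {n : ℤ} {E : Set C} {X : C} (h : ∀ Y ∈ E, HV n X Y) {Y : C}
    (hY : extClosure E Y) : HV n X Y := by
  induction hY with
  | of Y hY => exact h Y hY
  | zero Y hY => exact fun f => (Functor.map_isZero (shiftFunctor C n) hY).eq_of_tgt _ _
  | ext₂ T hT h₁ h₃ i1 i3 =>
    intro f
    have hT' : Triangle.mk (n.negOnePow • T.mor₁⟦n⟧') (n.negOnePow • T.mor₂⟦n⟧')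
        (n.negOnePow • T.mor₃⟦n⟧' ≫ (shiftFunctorComm C 1 n).hom.app T.obj₁) ∈ distTriang C :=
      T.shift_distinguished hT n
    obtain ⟨g, hg⟩ := coy2 hT' f (by
      have := i3 (f ≫ T.mor₂⟦n⟧')
      rw [Linear.comp_units_smul, this, smul_zero])
    rw [hg, i1 g, zero_comp]

lemma HV.ext {n : ℤ} {E E' : Set C} (h : ∀ X ∈ E, ∀ Y ∈ E', HV n X Y) {X Y : C}
    (hX : extClosure E X) (hY : extClosure E' Y) : HV n X Y :=
  HV.ext_left (fun X hX => HV.ext_right (h X hX) hY) hX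

lemma extClosure_iso {E : Set C} {X Y : C} (e : X ≅ Y) (hX : extClosure E X) : extClosure E Y :=
  extClosure.ext₂ (Triangle.mk e.hom (0 : Y ⟶ 0) 0)
    ((Triangle.distinguished_iff_of_isZero₃ _ (isZero_zero C)).2 (inferInstanceAs (IsIso e.hom)))
    hX (extClosure.zero _ (isZero_zero C))

lemma extClosure_mono {E E' : Set C} (h : ∀ X ∈ E, extClosure E' X) {X : C}
    (hX : extClosure E X) : extClosure E' X := by
  induction hX with
  | of X hX => exact h X hX
  | zero X hX => exact .zero X hX
  | ext₂ T hT h₁ h₃ i1 i3 => exact .ext₂ T hT i1 i3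

lemma extClosure_shift {E E' : Set C} (n : ℤ) (h : ∀ X ∈ E, extClosure E' (X⟦n⟧)) {X : C}
    (hX : extClosure E X) : extClosure E' (X⟦n⟧) := by
  induction hX with
  | of X hX => exact h X hX
  | zero X hX => exact .zero _ (Functor.map_isZero (shiftFunctor C n) hX)
  | ext₂ T hT h₁ h₃ i1 i3 => exact .ext₂ _ (T.shift_distinguished hT n) i1 i3

/-- bundled version -/
def extP (E : Set C) : ObjectProperty C := extClosure E

instance (E : Set C) : (extP E).IsClosedUnderIsomorphisms := ⟨fun e h => extClosure_iso e h⟩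

lemma extP_mul (E : Set C) : (extP E).extensionProduct (extP E) ≤ extP E := by
  rintro X ⟨Y, Z, f, g, k, hT, hY, hZ⟩
  exact extClosure.ext₂ _ hT hY hZ

lemma swap {P Q : ObjectProperty C} (h : ∀ X Y, P X → Q Y → HV 1 X Y) :
    Q.extensionProduct P ≤ P.extensionProduct Q := by
  rintro X ⟨Y, Z, f, g, k, hT, hY, hZ⟩
  have hk : k = 0 := h _ _ hZ hY k
  obtain ⟨e, -⟩ := exists_iso_binaryBiproduct_of_distTriang _ hT hk
  refine (P.extensionProduct Q).prop_of_iso (biprod.braiding _ _ ≪≫ e.symm)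
    ⟨_, _, _, _, _, binaryBiproductTriangle_distinguished Z Y, hZ, hY⟩

lemma ext_split [IsTriangulated C] {E E₁ E₂ : Set C}
    (h : ∀ X ∈ E₁, ∀ Y ∈ E₂, HV 1 X Y)
    (hE : ∀ X ∈ E, (extP E₁).extensionProduct (extP E₂) X)
    {Z : C} (hZ : extClosure E Z) : (extP E₁).extensionProduct (extP E₂) Z := by
  have h0 : ∀ X, IsZero X → (extP E₁).extensionProduct (extP E₂) X := fun X hX =>
    ⟨X, 0, 𝟙 X, 0, 0, contractible_distinguished X, .zero _ hX, .zero _ (isZero_zero _)⟩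
  induction hZ with
  | of X hX => exact hE X hX
  | zero X hX => exact h0 X hX
  | ext₂ T hT h₁ h₃ i1 i3 =>
    have : ((extP E₁).extensionProduct (extP E₂)).extensionProduct
      ((extP E₁).extensionProduct (extP E₂)) T.obj₂ := ⟨_, _, _, _, _, hT, i1, i3⟩
    rw [ObjectProperty.extensionProduct_assoc,
      ← ObjectProperty.extensionProduct_assoc (extP E₂)] at this
    replace this := ObjectProperty.monotone_extensionProduct_right _
      (ObjectProperty.monotone_extensionProduct_left _
        (swap (P := extP E₁) (Q := extP E₂) (fun X Y hX hY => HV.ext h hX hY))) _ this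
    rw [ObjectProperty.extensionProduct_assoc (extP E₁),
      ← ObjectProperty.extensionProduct_assoc (extP E₁)] at this
    exact ObjectProperty.monotone_extensionProduct_right _ (extP_mul E₂) _
      (ObjectProperty.monotone_extensionProduct_left _ (extP_mul E₁) _ this)

lemma split_left {E₁ E₂ : Set C} {X : C} (h : extClosure E₁ X) :
    (extP E₁).extensionProduct (extP E₂) X :=
  ⟨X, 0, 𝟙 X, 0, 0, contractible_distinguished X, h, .zero _ (isZero_zero _)⟩

lemma split_right {E₁ E₂ : Set C} {X : C} (h : extClosure E₂ X) :
    (extP E₁).extensionProduct (extP E₂) X :=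
  ⟨0, X, 0, 𝟙 X, 0, contractible_distinguished₁ X, .zero _ (isZero_zero _), h⟩

/-- shifts of objects of `B` by integers in a set `I`. -/
def shs (B : Set C) (I : Set ℤ) : Set C := {X | ∃ Y ∈ B, ∃ l ∈ I, X = Y⟦l⟧}

lemma genSub_ext {B : Set C} {X : C} (h : genSub B X) : extClosure (shs B Set.univ) X := by
  induction h with
  | of X hX =>
    exact extClosure_iso ((shiftFunctorZero C ℤ).app X) (.of _ ⟨X, hX, 0, trivial, rfl⟩)
  | zero X hX => exact .zero X hX
  | shift X n hX i =>
    refine extClosure_shift n ?_ i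
    rintro _ ⟨Y, hY, l, -, rfl⟩
    exact extClosure_iso ((shiftFunctorAdd C l n).app Y) (.of _ ⟨Y, hY, l + n, trivial, rfl⟩)
  | ext₂ T hT h₁ h₃ i1 i3 => exact .ext₂ T hT i1 i3

lemma ext_genSub {B : Set C} {I : Set ℤ} {X : C} (h : extClosure (shs B I) X) : genSub B X := by
  induction h with
  | of X hX =>
    obtain ⟨Y, hY, l, -, rfl⟩ := hX
    exact .shift _ _ (.of _ hY)
  | zero X hX => exact .zero X hX
  | ext₂ T hT h₁ h₃ i1 i3 => exact .ext₂ T hT i1 i3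

lemma ext_single (𝒜 : Set C) (h𝒜 : ∀ X ∈ 𝒜, ∀ Y ∈ 𝒜, HV 1 X Y)
    (hsum : ∀ X ∈ 𝒜, ∀ Y ∈ 𝒜, ∃ Z ∈ 𝒜, Nonempty (Z ≅ X ⊞ Y))
    (hz : ∃ Z ∈ 𝒜, IsZero Z) (n : ℤ) {X : C} (hX : extClosure (shs 𝒜 {n}) X) :
    ∃ Y ∈ 𝒜, Nonempty (X ≅ Y⟦n⟧) := by
  induction hX with
  | of X hX =>
    obtain ⟨Y, hY, _, rfl, rfl⟩ := hX
    exact ⟨Y, hY, ⟨Iso.refl _⟩⟩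
  | zero X hX =>
    obtain ⟨Z, hZ, hZ'⟩ := hz
    exact ⟨Z, hZ, ⟨hX.iso (Functor.map_isZero (shiftFunctor C n) hZ')⟩⟩
  | ext₂ T hT h₁ h₃ i1 i3 =>
    obtain ⟨Y₁, hY₁, ⟨e₁⟩⟩ := i1
    obtain ⟨Y₃, hY₃, ⟨e₃⟩⟩ := i3
    have h0 : T.mor₃ = 0 := by
      have := ((h𝒜 Y₃ hY₃ Y₁ hY₁).shift (n := 1) (a := n) (b := n) rfl)
        (e₃.inv ≫ T.mor₃ ≫ e₁.hom⟦(1 : ℤ)⟧')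
      rwa [← cancel_epi e₃.inv, ← cancel_mono (e₁.hom⟦(1 : ℤ)⟧'), Category.assoc, comp_zero,
        zero_comp]
    obtain ⟨e, -⟩ := exists_iso_binaryBiproduct_of_distTriang _ hT h0
    obtain ⟨Z, hZ, ⟨e'⟩⟩ := hsum _ hY₁ _ hY₃
    have := preservesBinaryBiproduct_of_preservesBiproduct (shiftFunctor C n) Y₁ Y₃
    exact ⟨Z, hZ, ⟨e ≪≫ biprod.mapIso e₁ e₃ ≪≫ ((shiftFunctor C n).mapBiprod Y₁ Y₃).symm ≪≫
      (shiftFunctor C n).mapIso e'.symm⟩⟩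

lemma fix_tri {Q' Z P' Q P : C} {i₃ : Q' ⟶ Z} {j₃ : Z ⟶ P'} {k₃ : P' ⟶ Q'⟦(1 : ℤ)⟧}
    (hT : Triangle.mk i₃ j₃ k₃ ∈ distTriang C) (eQ : Q' ≅ Q) (eP : P' ≅ P⟦(1 : ℤ)⟧) :
    ∃ (p : P ⟶ Q) (i : Q ⟶ Z) (j : Z ⟶ P⟦(1 : ℤ)⟧), Triangle.mk p i j ∈ distTriang C := by
  obtain ⟨p, hp⟩ := (shiftFunctor C (1 : ℤ)).map_surjective (-(eP.inv ≫ k₃ ≫ eQ.hom⟦(1 : ℤ)⟧'))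
  refine ⟨p, eQ.inv ≫ i₃, j₃ ≫ eP.hom, ?_⟩
  rw [rotate_distinguished_triangle]
  refine isomorphic_distinguished _ hT _ ?_
  refine Triangle.isoMk _ _ eQ.symm (Iso.refl _) eP.symm ?_ ?_ ?_
  · exact Category.comp_id _
  · change (j₃ ≫ eP.hom) ≫ eP.inv = 𝟙 _ ≫ j₃
    simp
  · change (-(shiftFunctor C (1 : ℤ)).map p) ≫ eQ.inv⟦(1 : ℤ)⟧' = eP.inv ≫ k₃
    rw [hp, neg_neg, Category.assoc, Category.assoc, ← Functor.map_comp, Iso.hom_inv_id,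
      CategoryTheory.Functor.map_id, Category.comp_id]

/-- The key computation of morphisms in the quotient. -/
lemma key [IsTriangulated C] (𝒜 B : Set C)
    (h𝒜 : ∀ X ∈ 𝒜, ∀ Y ∈ 𝒜, ∀ n : ℤ, n ≠ 0 → HV n X Y)
    (hsum : ∀ X ∈ 𝒜, ∀ Y ∈ 𝒜, ∃ Z ∈ 𝒜, Nonempty (Z ≅ X ⊞ Y))
    (hz : ∃ Z ∈ 𝒜, IsZero Z)
    (hB : ∀ Z ∈ B, extClosure (shs 𝒜 {0, 1}) Z)
    {E : Type u'} [Category.{v'} E] [Preadditive E] (Λ : C ⥤ E) [Λ.Additive]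
    (hΛ : ∀ ⦃X Y : C⦄ (s : X ⟶ Y), (genSubcat B).trW s → IsIso (Λ.map s))
    {X Y Y' : C} (hX : X ∈ 𝒜) (hY : Y ∈ 𝒜) (f : X ⟶ Y') (s : Y ⟶ Y')
    (hs : (genSubcat B).trW s) :
    ∃ (P Q : C) (_ : P ∈ 𝒜) (_ : Q ∈ 𝒜) (p : P ⟶ Q) (_ : (genSubcat B).trW p)
      (a : X ⟶ Y) (b : X ⟶ Q) (g : P ⟶ Y) (q : Λ.obj Q ⟶ Λ.obj P),
      q ≫ Λ.map p = 𝟙 _ ∧ Λ.map p ≫ q = 𝟙 _ ∧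
      Λ.map f = (Λ.map a + Λ.map b ≫ q ≫ Λ.map g) ≫ Λ.map s := by
  have hAA : ∀ (n : ℤ) (I J : Set ℤ), (∀ i ∈ I, ∀ j ∈ J, n + j - i ≠ 0) →
      ∀ X ∈ shs 𝒜 I, ∀ Y ∈ shs 𝒜 J, HV n X Y := by
    rintro n I J h _ ⟨X, hX, i, hi, rfl⟩ _ ⟨Y, hY, j, hj, rfl⟩
    exact (h𝒜 X hX Y hY _ (h i hi j hj)).shift (by ring)
  have hBs : ∀ (I : Set ℤ), ∀ X ∈ shs B I, extClosure (shs 𝒜 {n | ∃ i ∈ I, n = i ∨ n = i + 1}) X := by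
    rintro I _ ⟨X, hX, i, hi, rfl⟩
    refine extClosure_shift i ?_ (hB X hX)
    rintro _ ⟨Y, hY, l, hl, rfl⟩
    refine extClosure_iso ((shiftFunctorAdd C l i).app Y) (.of _ ⟨Y, hY, l + i, ?_, rfl⟩)
    refine ⟨i, hi, ?_⟩
    rcases hl with rfl | rfl
    · left; ring
    · right; ring
  have hBe : ∀ (I : Set ℤ) (X : C), extClosure (shs B I) X →
      extClosure (shs 𝒜 {n | ∃ i ∈ I, n = i ∨ n = i + 1}) X :=
    fun I X hX => extClosure_mono (hBs I) hX
  have hBB : ∀ (I J : Set ℤ), (∀ i ∈ I, ∀ j ∈ J, i < j) →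
      ∀ X ∈ shs B I, ∀ Y ∈ shs B J, HV 1 X Y := by
    intro I J h X hX Y hY
    refine HV.ext (hAA 1 _ _ ?_) (hBs I X hX) (hBs J Y hY)
    rintro _ ⟨i, hi, hi'⟩ _ ⟨j, hj, hj'⟩
    have := h i hi j hj
    omega
  have hA0 : ∀ X ∈ 𝒜, extClosure (shs 𝒜 {0}) X := fun X hX =>
    extClosure_iso ((shiftFunctorZero C ℤ).app X) (.of _ ⟨X, hX, 0, rfl, rfl⟩)
  obtain ⟨Z, π, δ, hT, hZ⟩ := hs
  -- step 1
  obtain ⟨Z₁, Zh, i₁, j₁, k₁, hT₁, hZ₁, hZh⟩ := ext_split (E₁ := shs B (Set.Iic 0))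
    (E₂ := shs B (Set.Ioi 0)) (hBB _ _ (fun i hi j hj => lt_of_le_of_lt hi hj)) (by
      rintro _ ⟨X, hX, l, -, rfl⟩
      by_cases hl : l ≤ 0
      · exact split_left (.of _ ⟨X, hX, l, hl, rfl⟩)
      · exact split_right (.of _ ⟨X, hX, l, not_le.1 hl, rfl⟩)) (genSub_ext hZ)
  obtain ⟨Y₁, s₁, π₁, hT₁'⟩ := distinguished_cocone_triangle₂ (i₁ ≫ δ)
  obtain ⟨t, ht₁, ht₂⟩ := cmpl2' hT₁' hT i₁ rfl
  obtain ⟨c, hc⟩ := coy2 hT₁ (f ≫ π) (by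
    refine HV.zero (HV.ext (hAA 0 {0} _ ?_) (hA0 X hX) (hBe _ _ hZh)) _
    rintro _ rfl _ ⟨j, hj, hj'⟩
    have : 0 < j := hj
    omega)
  have hδ : π ≫ δ = 0 := comp_distTriang_mor_zero₂₃ _ hT
  obtain ⟨f₁, hf₁⟩ := coy3 hT₁' c (by
    rw [← Category.assoc, ← hc, Category.assoc, hδ, comp_zero])
  obtain ⟨a₁, ha₁⟩ := coy2 hT (f - f₁ ≫ t) (by
    rw [Preadditive.sub_comp, Category.assoc f₁, ← ht₂, hc, hf₁]
    simp)
  -- step 2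
  obtain ⟨Zl, Z₂, i₂, j₂, k₂, hT₂, hZl, hZ₂⟩ := ext_split (E₁ := shs B (Set.Iio 0))
    (E₂ := shs B {0}) (hBB _ _ (by rintro i hi _ rfl; exact hi)) (by
      rintro _ ⟨X, hX, l, hl', rfl⟩
      by_cases hl : l = 0
      · exact split_right (.of _ ⟨X, hX, l, hl, rfl⟩)
      · exact split_left (.of _ ⟨X, hX, l, lt_of_le_of_ne hl' hl, rfl⟩)) hZ₁
  obtain ⟨δ₂, hδ₂⟩ := yon2 hT₂ (i₁ ≫ δ) (by
    refine HV.ext (hAA 1 _ {0} ?_) (hBe _ _ hZl) (hA0 Y hY) _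
    rintro _ ⟨j, hj, hj'⟩ _ rfl
    have : j < 0 := hj
    omega)
  obtain ⟨Y₂, s₂, π₂, hT₂'⟩ := distinguished_cocone_triangle₂ δ₂
  obtain ⟨r, hr₁, hr₂⟩ := cmpl2' hT₁' hT₂' j₂ hδ₂
  have hs₂ : IsIso (Λ.map s₂) := hΛ _ ⟨_, _, _, hT₂', ext_genSub hZ₂⟩
  have hs₁ : IsIso (Λ.map s₁) := hΛ _ ⟨_, _, _, hT₁', ext_genSub hZ₁⟩
  have hr : IsIso (Λ.map r) := by
    rw [← hr₁, Λ.map_comp] at hs₂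
    exact IsIso.of_isIso_comp_left (Λ.map s₁) (Λ.map r)
  -- step 3
  obtain ⟨Q', P', i₃, j₃, k₃, hT₃, hQ', hP'⟩ := ext_split (E₁ := shs 𝒜 {0})
    (E₂ := shs 𝒜 {1}) (hAA _ _ _ (by rintro _ rfl _ rfl; norm_num)) (by
      rintro _ ⟨X, hX, l, ⟨_, rfl, rfl | rfl⟩, rfl⟩
      · exact split_left (.of _ ⟨X, hX, _, rfl, rfl⟩)
      · exact split_right (.of _ ⟨X, hX, _, rfl, rfl⟩)) (hBe _ _ hZ₂)
  obtain ⟨Q, hQ, ⟨eQ⟩⟩ := ext_single 𝒜 (fun X hX Y hY => h𝒜 X hX Y hY 1 one_ne_zero) hsum hz _ hQ'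
  obtain ⟨P, hP, ⟨eP⟩⟩ := ext_single 𝒜 (fun X hX Y hY => h𝒜 X hX Y hY 1 one_ne_zero) hsum hz _ hP'
  obtain ⟨p, i, j, hT₄⟩ := fix_tri hT₃ (eQ ≪≫ (shiftFunctorZero C ℤ).app Q) eP
  have hp : (genSubcat B).trW p := ⟨_, _, _, hT₄, ext_genSub hZ₂⟩
  have := hΛ p hp
  obtain ⟨g₀, hg₀⟩ := yon3 hT₄ δ₂ ((h𝒜 Q hQ Y hY 1 one_ne_zero) _)
  obtain ⟨g, rfl⟩ := (shiftFunctor C (1 : ℤ)).map_surjective g₀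
  obtain ⟨k, hk₁, hk₂⟩ := cmpl2 hT₄ hT₂' g (𝟙 _) (by rw [Category.id_comp, hg₀])
  rw [Category.comp_id] at hk₂
  obtain ⟨b, hb⟩ := coy3 hT₄ (f₁ ≫ r ≫ π₂) ((h𝒜 X hX P hP 1 one_ne_zero) _)
  obtain ⟨a, ha⟩ := coy2 hT₂' (f₁ ≫ r - b ≫ k) (by
    rw [Preadditive.sub_comp, Category.assoc, hb, Category.assoc, hk₂, sub_self])
  refine ⟨P, Q, hP, hQ, p, hp, a + a₁, b, g, inv (Λ.map p), by simp, by simp, ?_⟩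
  have hk : Λ.map k = inv (Λ.map p) ≫ Λ.map g ≫ Λ.map s₂ := by
    rw [IsIso.eq_inv_comp, ← Λ.map_comp, hk₁, Λ.map_comp]
  have e1 : Λ.map f₁ = (Λ.map a + Λ.map b ≫ inv (Λ.map p) ≫ Λ.map g) ≫ Λ.map s₁ := by
    rw [← cancel_mono (Λ.map r), Category.assoc, ← Λ.map_comp, ← Λ.map_comp, hr₁,
      sub_eq_iff_eq_add.1 ha, Λ.map_add, Λ.map_comp, Λ.map_comp, hk]
    simp
  rw [sub_eq_iff_eq_add.1 ha₁, Λ.map_add, Λ.map_comp, Λ.map_comp, e1, Λ.map_add, ← ht₁, Λ.map_comp]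
  simp only [Preadditive.add_comp, Category.assoc]
  abel

end Abs
section Base

variable {A : Type u} [Category.{v} A] [Preadditive A] [HasZeroObject A] [HasFiniteBiproducts A]

lemma iota_HV (X Y : A) (n : ℤ) (hn : n ≠ 0) : HV n (iotaA.obj X) (iotaA.obj Y) := by
  intro f
  let e := (homotopyQ.commShiftIso n).app
    ((HomologicalComplex.single A (ComplexShape.up ℤ) 0).obj Y)
  obtain ⟨g, hg⟩ : ∃ g : (HomologicalComplex.single A (ComplexShape.up ℤ) 0).obj X ⟶
      (shiftFunctor (CochainComplex A ℤ) n).obj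
        ((HomologicalComplex.single A (ComplexShape.up ℤ) 0).obj Y), homotopyQ.map g = f ≫ e.inv :=
    homotopyQ.map_surjective (f ≫ e.inv)
  have : g = 0 := by
    apply HomologicalComplex.Hom.ext
    funext i
    by_cases hi : i = 0
    · refine IsZero.eq_of_tgt ?_ _ _
      exact HomologicalComplex.isZero_single_obj_X (ComplexShape.up ℤ) 0 Y (i + n) (by omega)
    · exact (HomologicalComplex.isZero_single_obj_X _ _ _ _ hi).eq_of_src _ _
  rw [this, Functor.map_zero] at hg
  rw [← cancel_mono e.inv, ← hg, zero_comp]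

instance iota_full : (iotaA (A := A)).Full := inferInstance

instance iota_faithful : (iotaA (A := A)).Faithful where
  map_injective {X Y} f g h := by
    have H := HomotopyCategory.homotopyOfEq _ _ h
    refine (HomologicalComplex.single A (ComplexShape.up ℤ) 0).map_injective ?_
    ext
    rw [H.comm 0]
    simp [dNext, prevD]

instance iota_additive : (iotaA (A := A)).Additive where
  map_add {X Y f g} := by
    change homotopyQ.map _ = _
    rw [Functor.map_add, Functor.map_add]
    rfl

lemma cone_tri {P Q : A} (s : P ⟶ Q) :
    ∃ (i : iotaA.obj Q ⟶ homotopyQ.obj (twoComplex (-1) s))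
      (j : homotopyQ.obj (twoComplex (-1) s) ⟶ (iotaA.obj P)⟦(1 : ℤ)⟧),
      Triangle.mk (iotaA.map s) i j ∈ distTriang (HomotopyCategory A (ComplexShape.up ℤ)) := by
  let K := twoComplex (-1) s
  have hP : K.X (-1) = P := by simp [K, twoComplex]
  have hQ : K.X 0 = Q := by simp [K, twoComplex]
  have hK : ∀ i, i ≠ -1 → i ≠ 0 → IsZero (K.X i) := by
    intro i h1 h2
    have : K.X i = 0 := by simp [K, twoComplex, h1, h2]
    rw [this]
    exact isZero_zero _
  have hd : eqToHom hP.symm ≫ K.d (-1) 0 = s ≫ eqToHom hQ.symm := by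
    have : K.d (-1) 0 = eqToHom hP ≫ s ≫ eqToHom hQ.symm := by
      dsimp only [K, twoComplex]
      rw [dif_pos (⟨rfl, rfl⟩ : (-1 : ℤ) = -1 ∧ (0 : ℤ) = -1 + 1)]
    rw [this, eqToHom_trans_assoc, eqToHom_refl, Category.id_comp]
  let φ := (HomologicalComplex.single A (ComplexShape.up ℤ) 0).map s
  let β : (HomologicalComplex.single A (ComplexShape.up ℤ) 0).obj Q ⟶ K :=
    HomologicalComplex.mkHomFromSingle (eqToHom hQ.symm) (by
      intro k hk
      have : k = 1 := by simpa using hk.symm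
      subst this
      exact (hK 1 (by omega) (by omega)).eq_of_tgt _ _)
  let α : CochainComplex.HomComplex.Cochain
      ((HomologicalComplex.single A (ComplexShape.up ℤ) 0).obj P) K (-1) :=
    .single ((HomologicalComplex.singleObjXSelf (ComplexShape.up ℤ) 0 P).hom ≫ eqToHom hP.symm) (-1)
  have hδ : CochainComplex.HomComplex.δ (-1) 0 α =
      CochainComplex.HomComplex.Cochain.ofHom (φ ≫ β) := by
    dsimp only [α]
    rw [CochainComplex.HomComplex.Cochain.δ_single _ (-1) 0 (by omega) (-1) 0 (by omega) (by omega)]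
    ext p
    by_cases hp : p = 0
    · subst hp
      simp [φ, β, hd, HomologicalComplex.single_map_f_self]
    · exact (HomologicalComplex.isZero_single_obj_X _ _ _ _ hp).eq_of_src _ _
  let Φ := CochainComplex.mappingCone.desc φ α β hδ
  have : ∀ i, IsIso (Φ.f i) := by
    intro i
    by_cases h1 : i = -1
    · subst h1
      have e1 := CochainComplex.mappingCone.inl_v_desc_f φ α β hδ 0 (-1) (by omega)
      have : IsIso ((CochainComplex.mappingCone.inl φ).v 0 (-1) (zero_add _)) := by
        refine ⟨(CochainComplex.mappingCone.fst φ).1.v (-1) 0 (by omega), ?_, ?_⟩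
        · exact CochainComplex.mappingCone.inl_v_fst_v _ _ _ _
        · have := CochainComplex.mappingCone.id_X φ (-1) 0 (by omega)
          rw [← this]
          have h0 : (CochainComplex.mappingCone.snd φ).v (-1) (-1) (by omega) = 0 :=
            (HomologicalComplex.isZero_single_obj_X _ _ _ _ (by omega)).eq_of_tgt _ _
          rw [h0, zero_comp, add_zero]
      have h2 : IsIso (α.v 0 (-1) (by omega)) := by
        dsimp only [α]
        rw [CochainComplex.HomComplex.Cochain.single_v]
        infer_instance
      rw [← e1] at h2
      exact IsIso.of_isIso_comp_left ((CochainComplex.mappingCone.inl φ).v 0 (-1) (zero_add _)) _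
    by_cases h2 : i = 0
    · subst h2
      have e1 := CochainComplex.mappingCone.inr_f_desc_f φ α β hδ 0
      have : IsIso ((CochainComplex.mappingCone.inr φ).f 0) := by
        refine ⟨(CochainComplex.mappingCone.snd φ).v 0 0 (by omega), ?_, ?_⟩
        · exact CochainComplex.mappingCone.inr_f_snd_v _ _
        · have := CochainComplex.mappingCone.id_X φ 0 1 (by omega)
          rw [← this]
          have h0 : (CochainComplex.mappingCone.fst φ).1.v 0 1 (by omega) = 0 :=
            (HomologicalComplex.isZero_single_obj_X _ _ _ _ (by omega)).eq_of_tgt _ _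
          rw [h0, zero_comp, AddZeroClass.zero_add (M := _ ⟶ _)]
      have h2 : IsIso (β.f 0) := by
        dsimp only [β]
        rw [HomologicalComplex.mkHomFromSingle_f]
        infer_instance
      rw [← e1] at h2
      exact IsIso.of_isIso_comp_left ((CochainComplex.mappingCone.inr φ).f 0) _
    · refine isIso_of_source_target_iso_zero _ (IsZero.isoZero ?_) (hK i h1 h2).isoZero
      rw [CochainComplex.mappingCone.isZero_X_iff]
      exact ⟨HomologicalComplex.isZero_single_obj_X _ _ _ _ (by omega),
        HomologicalComplex.isZero_single_obj_X _ _ _ _ h2⟩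
  have hΦ : IsIso Φ := HomologicalComplex.Hom.isIso_of_components Φ
  let e : homotopyQ.obj (CochainComplex.mappingCone φ) ≅ homotopyQ.obj K :=
    homotopyQ.mapIso (asIso Φ)
  have hT := HomotopyCategory.mappingCone_triangleh_distinguished φ
  let T := CochainComplex.mappingCone.triangleh φ
  let i0 : iotaA.obj Q ⟶ homotopyQ.obj (CochainComplex.mappingCone φ) := T.mor₂
  let j0 : homotopyQ.obj (CochainComplex.mappingCone φ) ⟶ (iotaA.obj P)⟦(1 : ℤ)⟧ := T.mor₃
  have hT' : Triangle.mk (iotaA.map s) i0 j0 ∈ distTriang _ := hT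
  refine ⟨i0 ≫ e.hom, e.inv ≫ j0, isomorphic_distinguished _ hT' _ ?_⟩
  refine Triangle.isoMk _ _ (Iso.refl _) (Iso.refl _) e.symm ?_ ?_ ?_
  · exact (Category.comp_id _).trans (Category.id_comp _).symm
  · change (i0 ≫ e.hom) ≫ e.inv = 𝟙 _ ≫ i0
    simp
  · change (e.inv ≫ j0) ≫ (shiftFunctor _ (1 : ℤ)).map (𝟙 _) = e.inv ≫ j0
    rw [CategoryTheory.Functor.map_id]
    exact Category.comp_id _

/-- the objects of `A` in the homotopy category -/
def iotaSet (A : Type u) [Category.{v} A] [Preadditive A] [HasZeroObject A]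
    [HasFiniteBiproducts A] : Set (HomotopyCategory A (ComplexShape.up ℤ)) :=
  {X | ∃ Y : A, X = iotaA.obj Y}

lemma cone_ext (S : MorphismProperty A) :
    ∀ Z ∈ coneSet S, extClosure (shs (iotaSet A) {0, 1}) Z := by
  rintro _ ⟨P, Q, s, -, rfl⟩
  obtain ⟨i, j, hT⟩ := cone_tri s
  refine extClosure.ext₂ _ (rot_of_distTriang _ hT) ?_ ?_
  · exact extClosure_iso ((shiftFunctorZero _ ℤ).app (iotaA.obj Q))
      (.of _ ⟨_, ⟨Q, rfl⟩, 0, by simp, rfl⟩)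
  · exact .of _ ⟨_, ⟨P, rfl⟩, 1, by simp, rfl⟩

lemma iota_sum : ∀ X ∈ iotaSet A, ∀ Y ∈ iotaSet A, ∃ Z ∈ iotaSet A, Nonempty (Z ≅ X ⊞ Y) := by
  rintro _ ⟨X, rfl⟩ _ ⟨Y, rfl⟩
  have := preservesBinaryBiproduct_of_preservesBiproduct (iotaA (A := A)) X Y
  exact ⟨_, ⟨X ⊞ Y, rfl⟩, ⟨iotaA.mapBiprod X Y⟩⟩

lemma iota_zero : ∃ Z ∈ iotaSet A, IsZero Z :=
  ⟨_, ⟨0, rfl⟩, Functor.map_isZero iotaA (isZero_zero A)⟩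

lemma trW_of_S (S : MorphismProperty A) {P Q : A} (s : P ⟶ Q) (hs : S s) :
    (genSubcat (coneSet S)).trW (iotaA.map s) := by
  obtain ⟨i, j, hT⟩ := cone_tri s
  exact ⟨_, _, _, hT, .of _ ⟨P, Q, s, hs, rfl⟩⟩

lemma uFun_inv (S : MorphismProperty A) : S.IsInvertedBy (uFun S) := by
  intro P Q s hs
  have := MorphismProperty.Q_inverts _ _ (trW_of_S S s hs)
  obtain ⟨t, h1, h2⟩ := this
  exact ⟨t, h1, h2⟩

end Base
section Loc

set_option linter.unusedSectionVars false

variable {A : Type u} [Category.{v} A] [Preadditive A] [HasZeroObject A] [HasFiniteBiproducts A]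

/-- the hypotheses on `S`. -/
class SumClosed (S : MorphismProperty A) : Prop where
  hid : ∀ X : A, S (𝟙 X)
  hsum : ∀ ⦃X Y X' Y' : A⦄ (s : X ⟶ Y) (s' : X' ⟶ Y'), S s → S s' → S (biprod.map s s')

/-- biproduct versus product. -/
noncomputable def pairIso (X : WalkingPair → A) [HasProduct X] :
    X .left ⊞ X .right ≅ ∏ᶜ X where
  hom := Pi.lift (fun j => match j with
    | .left => biprod.fst
    | .right => biprod.snd)
  inv := biprod.lift (Pi.π X .left) (Pi.π X .right)
  hom_inv_id := by
    apply biprod.hom_ext <;> simp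
  inv_hom_id := by
    apply Pi.hom_ext
    rintro (_ | _) <;> simp

lemma pairIso_left (X : WalkingPair → A) [HasProduct X] :
    (pairIso X).hom ≫ Pi.π X .left = biprod.fst := by simp [pairIso]

lemma pairIso_right (X : WalkingPair → A) [HasProduct X] :
    (pairIso X).hom ≫ Pi.π X .right = biprod.snd := by simp [pairIso]

lemma pair_aux {X₁ X₂ : WalkingPair → A} [HasProduct X₁] [HasProduct X₂]
    (f : ∀ j, X₁ j ⟶ X₂ j) {P Q P' Q' : A} (s : P ⟶ Q) (s' : P' ⟶ Q')
    (l : P ⟶ X₁ .left) (l' : P' ⟶ X₁ .right) (r : Q ⟶ X₂ .left) (r' : Q' ⟶ X₂ .right)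
    (h1 : l ≫ f .left = s ≫ r) (h2 : l' ≫ f .right = s' ≫ r') :
    (biprod.map l l' ≫ (pairIso X₁).hom) ≫ Limits.Pi.map f =
    biprod.map s s' ≫ (biprod.map r r' ≫ (pairIso X₂).hom) := by
  apply Pi.hom_ext
  rintro (_ | _)
  · simp only [Category.assoc, Pi.map_π, pairIso_left, reassoc_of% (pairIso_left X₁),
      biprod.map_fst, biprod.map_fst_assoc, h1]
  · simp only [Category.assoc, Pi.map_π, pairIso_right, reassoc_of% (pairIso_right X₁),
      biprod.map_snd, biprod.map_snd_assoc, h2]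

variable (S : MorphismProperty A)

instance : S.Q.IsLocalization S.isoClosure := by
  refine Functor.IsLocalization.of_equivalence_source S.Q S S.Q S.isoClosure
    CategoryTheory.Equivalence.refl ?_ ?_ (Iso.refl _)
  · rw [MorphismProperty.isoClosure_isoClosure]
    exact S.le_isoClosure
  · have : S.isoClosure ≤ (MorphismProperty.isomorphisms _).inverseImage S.Q := by
      rw [MorphismProperty.isoClosure_le_iff]
      exact fun _ _ f hf => S.Q_inverts f hf
    exact fun _ _ f hf => this f hf

variable [SumClosed S]

instance : S.isoClosure.ContainsIdentities :=
  ⟨fun X => S.le_isoClosure _ (SumClosed.hid X)⟩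

instance : S.isoClosure.IsStableUnderProductsOfShape WalkingPair := by
  refine MorphismProperty.IsStableUnderProductsOfShape.mk _ _ ?_
  intro X₁ X₂ _ _ f hf
  obtain ⟨_, _, s, hs, ⟨e⟩⟩ := hf .left
  obtain ⟨_, _, s', hs', ⟨e'⟩⟩ := hf .right
  refine ⟨_, _, _, SumClosed.hsum s s' hs hs', ⟨?_⟩⟩
  refine Arrow.isoMk (biprod.mapIso (Arrow.leftFunc.mapIso e) (Arrow.leftFunc.mapIso e') ≪≫
    pairIso X₁) (biprod.mapIso (Arrow.rightFunc.mapIso e) (Arrow.rightFunc.mapIso e') ≪≫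
    pairIso X₂) ?_
  have h1 : e.hom.left ≫ f .left = s ≫ e.hom.right := Arrow.w e.hom
  have h2 : e'.hom.left ≫ f .right = s' ≫ e'.hom.right := Arrow.w e'.hom
  change (biprod.map e.hom.left e'.hom.left ≫ (pairIso X₁).hom) ≫ Limits.Pi.map f =
    biprod.map s s' ≫ (biprod.map e.hom.right e'.hom.right ≫ (pairIso X₂).hom)
  exact pair_aux f s s' _ _ _ _ h1 h2

instance : PreservesLimitsOfShape (Discrete WalkingPair) S.Q :=
  Localization.preservesProductsOfShape S.Q S.isoClosure WalkingPair

/-- the product in the localization. -/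
noncomputable def locLim (X Y : A) :
    IsLimit (BinaryFan.mk (S.Q.map (biprod.fst : X ⊞ Y ⟶ X)) (S.Q.map (biprod.snd : X ⊞ Y ⟶ Y))) :=
  mapIsLimitOfPreservesOfIsLimit S.Q _ _ (BinaryBiproduct.isLimit X Y)

variable {S}

/-- lift to the product. -/
noncomputable def plift {W : S.Localization} {X Y : A} (f : W ⟶ S.Q.obj X) (g : W ⟶ S.Q.obj Y) :
    W ⟶ S.Q.obj (X ⊞ Y) := (BinaryFan.IsLimit.lift' (locLim S X Y) f g).1

lemma plift_fst {W : S.Localization} {X Y : A} (f : W ⟶ S.Q.obj X) (g : W ⟶ S.Q.obj Y) :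
    plift f g ≫ S.Q.map biprod.fst = f := (BinaryFan.IsLimit.lift' (locLim S X Y) f g).2.1

lemma plift_snd {W : S.Localization} {X Y : A} (f : W ⟶ S.Q.obj X) (g : W ⟶ S.Q.obj Y) :
    plift f g ≫ S.Q.map biprod.snd = g := (BinaryFan.IsLimit.lift' (locLim S X Y) f g).2.2

lemma prod_ext {W : S.Localization} {X Y : A} (f g : W ⟶ S.Q.obj (X ⊞ Y))
    (h1 : f ≫ S.Q.map biprod.fst = g ≫ S.Q.map biprod.fst)
    (h2 : f ≫ S.Q.map biprod.snd = g ≫ S.Q.map biprod.snd) : f = g :=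
  BinaryFan.IsLimit.hom_ext (locLim S X Y) h1 h2

/-- underlying object -/
def ob (X : S.Localization) : A := (Localization.Construction.objEquiv S).symm X

lemma ob_eq (X : S.Localization) : S.Q.obj (ob X) = X := rfl

/-- addition -/
noncomputable def padd {X Y : S.Localization} (f g : X ⟶ Y) : X ⟶ Y :=
  plift (X := ob Y) (Y := ob Y) f g ≫ S.Q.map (biprod.fst + biprod.snd)

lemma padd_def {X : S.Localization} {Y : A} (f g : X ⟶ S.Q.obj Y) :
    padd f g = plift f g ≫ S.Q.map (biprod.fst + biprod.snd) := rfl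

lemma comp_padd' {W X : S.Localization} {Y : A} (h : W ⟶ X) (f g : X ⟶ S.Q.obj Y) :
    h ≫ padd f g = padd (h ≫ f) (h ≫ g) := by
  rw [padd_def, padd_def, ← Category.assoc]
  congr 1
  apply prod_ext
  · rw [plift_fst, Category.assoc, plift_fst]
  · rw [plift_snd, Category.assoc, plift_snd]

lemma comp_padd {W X Y : S.Localization} (h : W ⟶ X) (f g : X ⟶ Y) :
    h ≫ padd f g = padd (h ≫ f) (h ≫ g) := comp_padd' (Y := ob Y) h f g

lemma padd_Q {W : S.Localization} {X Y : A} (k : W ⟶ S.Q.obj X) (a b : X ⟶ Y) :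
    padd (k ≫ S.Q.map a) (k ≫ S.Q.map b) = k ≫ S.Q.map (a + b) := by
  have : plift (S.Q.map a) (S.Q.map b) = S.Q.map (biprod.lift a b) := by
    apply prod_ext
    · rw [plift_fst, ← Functor.map_comp, biprod.lift_fst]
    · rw [plift_snd, ← Functor.map_comp, biprod.lift_snd]
  rw [← comp_padd]
  congr 1
  rw [padd_def, this, ← Functor.map_comp, Preadditive.comp_add, biprod.lift_fst, biprod.lift_snd]

lemma padd_exists {W : S.Localization} {X Y : A} (f : W ⟶ S.Q.obj X) (g : W ⟶ S.Q.obj Y) :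
    ∃ k : W ⟶ S.Q.obj (X ⊞ Y), f = k ≫ S.Q.map biprod.fst ∧ g = k ≫ S.Q.map biprod.snd :=
  ⟨plift f g, (plift_fst _ _).symm, (plift_snd _ _).symm⟩

lemma padd_comm' {W : S.Localization} {X : A} (f g : W ⟶ S.Q.obj X) : padd f g = padd g f := by
  obtain ⟨k, rfl, rfl⟩ := padd_exists f g
  rw [padd_Q, padd_Q, add_comm]

lemma padd_assoc' {W : S.Localization} {X : A} (f g h : W ⟶ S.Q.obj X) :
    padd (padd f g) h = padd f (padd g h) := by
  obtain ⟨k, rfl, rfl⟩ := padd_exists f g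
  obtain ⟨l, rfl, rfl⟩ := padd_exists k h
  simp only [Category.assoc, ← Functor.map_comp, padd_Q]
  rw [add_assoc]

/-- zero -/
noncomputable def pzero (X Y : S.Localization) : X ⟶ Y := S.Q.map (0 : ob X ⟶ ob Y)

lemma comp_pz {X Y : S.Localization} (f : X ⟶ Y) (Z : S.Localization) :
    f ≫ pzero Y Z = pzero X Z := by
  let P : MorphismProperty S.Localization := fun X Y f => ∀ Z, f ≫ pzero Y Z = pzero X Z
  have : P.IsStableUnderComposition := ⟨by
    intro X Y Z f g hf hg W
    rw [Category.assoc, hg, hf]⟩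
  have hP : P = ⊤ := by
    apply Localization.Construction.morphismProperty_eq_top'
    · intro X Y f Z
      exact (S.Q.map_comp f (0 : Y ⟶ ob Z)).symm.trans (by rw [comp_zero]; rfl)
    · intro X Y e he Z
      rw [← he, Iso.inv_hom_id_assoc]
  have h : P f := by rw [hP]; trivial
  exact h Z

lemma padd_comp {W X Y : S.Localization} (f g : W ⟶ X) (h : X ⟶ Y) :
    padd f g ≫ h = padd (f ≫ h) (g ≫ h) := by
  let P : MorphismProperty S.Localization := fun X Y h => ∀ (W : S.Localization) (f g : W ⟶ X),
    padd f g ≫ h = padd (f ≫ h) (g ≫ h)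
  have : P.IsStableUnderComposition := ⟨by
    intro X Y Z f g hf hg W a b
    rw [← Category.assoc, hf, hg, Category.assoc, Category.assoc]⟩
  have hP : P = ⊤ := by
    apply Localization.Construction.morphismProperty_eq_top'
    · intro X Y a W f g
      obtain ⟨k, rfl, rfl⟩ := padd_exists f g
      rw [padd_Q]
      simp only [Category.assoc, ← Functor.map_comp, padd_Q, Preadditive.add_comp]
    · intro X Y e he W f g
      rw [← cancel_mono e.hom, he]
      simp
  have h' : P h := by rw [hP]; trivial
  exact h' W f g

lemma pz_padd {X : S.Localization} {Y : A} (f : X ⟶ S.Q.obj Y) : padd (pzero _ _) f = f := by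
  have := padd_Q f 0 (𝟙 Y)
  rw [zero_add, CategoryTheory.Functor.map_id, Category.comp_id] at this
  rw [← comp_pz f]
  exact this

/-- negation -/
noncomputable def pneg {X Y : S.Localization} (f : X ⟶ Y) : X ⟶ Y :=
  f ≫ (S.Q.map (-𝟙 (ob Y)) : S.Q.obj (ob Y) ⟶ S.Q.obj (ob Y))

lemma pneg_padd {X : S.Localization} {Y : A} (f : X ⟶ S.Q.obj Y) :
    padd (pneg f) f = pzero _ _ := by
  have := padd_Q f (-𝟙 Y) (𝟙 Y)
  rw [neg_add_cancel, CategoryTheory.Functor.map_id, Category.comp_id] at this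
  exact this.trans (comp_pz f _)

noncomputable instance : Preadditive S.Localization where
  homGroup X Y :=
    letI : Add (X ⟶ Y) := ⟨padd⟩
    letI : Zero (X ⟶ Y) := ⟨pzero X Y⟩
    letI : Neg (X ⟶ Y) := ⟨pneg⟩
    { nsmul := nsmulRec
      zsmul := zsmulRec
      add_assoc := fun f g h => padd_assoc' (X := ob Y) f g h
      add_comm := fun f g => padd_comm' (X := ob Y) f g
      zero_add := fun f => pz_padd (Y := ob Y) f
      add_zero := fun f => (padd_comm' (X := ob Y) _ _).trans (pz_padd (Y := ob Y) f)
      neg_add_cancel := fun f => pneg_padd (Y := ob Y) f }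
  add_comp _ _ _ f g h := padd_comp f g h
  comp_add _ _ _ h f g := comp_padd h f g

instance Q_additive : S.Q.Additive where
  map_add {X Y f g} := by
    have := padd_Q (𝟙 (S.Q.obj X)) f g
    rw [Category.id_comp, Category.id_comp, Category.id_comp] at this
    exact this.symm

instance : HasZeroObject S.Localization :=
  ⟨S.Q.obj 0, Functor.map_isZero S.Q (isZero_zero A)⟩

instance : HasBinaryBiproducts S.Localization := by
  have : HasProductsOfShape WalkingPair S.Localization :=
    Localization.hasProductsOfShape S.Q S.isoClosure WalkingPair
  have : HasBinaryProducts S.Localization := this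
  exact HasBinaryBiproducts.of_hasBinaryProducts

instance : HasFiniteBiproducts S.Localization := by
  have : HasProductsOfShape WalkingPair S.Localization :=
    Localization.hasProductsOfShape S.Q S.isoClosure WalkingPair
  have : HasBinaryProducts S.Localization := this
  have : HasFiniteProducts S.Localization := hasFiniteProducts_of_has_binary_and_terminal
  exact HasFiniteBiproducts.of_hasFiniteProducts

end Loc
section GG

set_option linter.unusedSectionVars false

variable {A : Type u} [Category.{v} A] [Preadditive A] [HasZeroObject A] [HasFiniteBiproducts A]
  {C : Type u'} [Category.{v'} C] [Preadditive C] [HasZeroObject C] [HasFiniteBiproducts C]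
  (S : MorphismProperty A) (L : A ⥤ C) [L.Additive] (hL : S.IsInvertedBy L)

/-- induced functor on homotopy categories -/
noncomputable abbrev KF : HomotopyCategory A (ComplexShape.up ℤ) ⥤
    HomotopyCategory C (ComplexShape.up ℤ) := L.mapHomotopyCategory (ComplexShape.up ℤ)

/-- compatibility with the embedding -/
noncomputable def KFiso : iotaA ⋙ KF L ≅ L ⋙ iotaA :=
  Functor.associator _ _ _ ≪≫
  Functor.isoWhiskerLeft _ (L.mapHomotopyCategoryFactors (ComplexShape.up ℤ)) ≪≫
  (Functor.associator _ _ _).symm ≪≫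
  Functor.isoWhiskerRight (HomologicalComplex.singleMapHomologicalComplex L (ComplexShape.up ℤ) 0) _
    ≪≫ Functor.associator _ _ _

lemma iso_iff_KF {P Q : A} (p : P ⟶ Q) : IsIso ((KF L).map (iotaA.map p)) ↔ IsIso (L.map p) := by
  rw [← isIso_iff_of_reflects_iso (L.map p) (iotaA (A := C))]
  exact NatIso.isIso_map_iff (KFiso L) p

include hL in
lemma KF_kill {Z : HomotopyCategory A (ComplexShape.up ℤ)} (hZ : genSub (coneSet S) Z) :
    IsZero ((KF L).obj Z) := by
  induction hZ with
  | of X hX =>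
    obtain ⟨P, Q, s, hs, rfl⟩ := hX
    obtain ⟨i, j, hT⟩ := cone_tri s
    have := (KF L).map_distinguished _ hT
    refine (Triangle.isZero₃_iff_isIso₁ _ this).2 ?_
    exact (iso_iff_KF L s).2 (hL s hs)
  | zero X hX => exact Functor.map_isZero _ hX
  | shift X n _ ih =>
    exact (Functor.map_isZero (shiftFunctor _ n) ih).of_iso (((KF L).commShiftIso n).app X)
  | ext₂ T hT _ _ ih1 ih3 =>
    exact Triangle.isZero₂_of_isZero₁₃ _ ((KF L).map_distinguished _ hT) ih1 ih3
  
include hL in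
lemma KF_inv : (genSubcat (coneSet S)).trW.IsInvertedBy (KF L) := by
  rintro X Y s ⟨Z, i, j, hT, hZ⟩
  have := (KF L).map_distinguished _ hT
  exact (Triangle.isZero₃_iff_isIso₁ _ this).1 (KF_kill S L hL hZ)

include hL in
lemma L_iso {P Q : A} (p : P ⟶ Q) (hp : (genSubcat (coneSet S)).trW (iotaA.map p)) :
    IsIso (L.map p) := (iso_iff_KF L p).1 (KF_inv S L hL _ hp)

/-- the lift to the Verdier quotient. -/
noncomputable def KL : (genSubcat (coneSet S)).trW.Localization ⥤
    HomotopyCategory C (ComplexShape.up ℤ) :=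
  Localization.Construction.lift (KF L) (KF_inv S L hL)

/-- comparison -/
noncomputable def KLiso : uBig S ⋙ KL S L hL ≅ L ⋙ iotaA :=
  Functor.associator _ _ _ ≪≫ Functor.isoWhiskerLeft iotaA
    (eqToIso (Localization.Construction.fac (KF L) (KF_inv S L hL))) ≪≫ KFiso L

/-- the action on morphisms -/
noncomputable def gm {X Y : A} (f : (uBig S).obj X ⟶ (uBig S).obj Y) : L.obj X ⟶ L.obj Y :=
  iotaA.preimage ((KLiso S L hL).inv.app X ≫ (KL S L hL).map f ≫ (KLiso S L hL).hom.app Y)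

lemma gm_map {X Y : A} (f : (uBig S).obj X ⟶ (uBig S).obj Y) :
    iotaA.map (gm S L hL f) =
      (KLiso S L hL).inv.app X ≫ (KL S L hL).map f ≫ (KLiso S L hL).hom.app Y :=
  Functor.map_preimage _ _

lemma gm_comp {X Y Z : A} (f : (uBig S).obj X ⟶ (uBig S).obj Y)
    (g : (uBig S).obj Y ⟶ (uBig S).obj Z) :
    gm S L hL (f ≫ g) = gm S L hL f ≫ gm S L hL g := by
  apply (iotaA (A := C)).map_injective
  rw [Functor.map_comp, gm_map, gm_map, gm_map, Functor.map_comp]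
  simp only [Category.assoc]
  rw [Iso.hom_inv_id_app_assoc]

lemma gm_u {X Y : A} (f : X ⟶ Y) : gm S L hL ((uBig S).map f) = L.map f := by
  apply (iotaA (A := C)).map_injective
  rw [gm_map]
  exact NatIso.naturality_1 (KLiso S L hL) f

lemma gm_id (X : A) : gm S L hL (𝟙 ((uBig S).obj X)) = 𝟙 (L.obj X) := by
  rw [← CategoryTheory.Functor.map_id, gm_u, CategoryTheory.Functor.map_id]

/-- the retraction functor -/
noncomputable def GF : AddLoc S ⥤ C where
  obj X := L.obj X
  map f := gm S L hL f
  map_id X := gm_id S L hL X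
  map_comp f g := gm_comp S L hL f g

lemma GF_fac : uFun S ⋙ GF S L hL = L := by
  refine CategoryTheory.Functor.ext (fun X => rfl) ?_
  intro X Y f
  refine (gm_u S L hL f).trans ?_
  exact ((Category.id_comp _).trans (Category.comp_id _)).symm

end GG
section Fin

set_option linter.unusedSectionVars false

variable {A : Type u} [Category.{v} A] [Preadditive A] [HasZeroObject A] [HasFiniteBiproducts A]
  (S : MorphismProperty A) [SumClosed S]

/-- the comparison functor -/
noncomputable def QC : S.Localization ⥤ AddLoc S :=
  Localization.Construction.lift (uFun S) (uFun_inv S)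

lemma QC_fac : S.Q ⋙ QC S = uFun S := Localization.Construction.fac _ _

/-- its action on morphisms -/
noncomputable def cm {X Y : A} (ψ : S.Q.obj X ⟶ S.Q.obj Y) :
    (uBig S).obj X ⟶ (uBig S).obj Y := (QC S).map ψ

lemma cm_comp {X Y Z : A} (ψ : S.Q.obj X ⟶ S.Q.obj Y) (χ : S.Q.obj Y ⟶ S.Q.obj Z) :
    cm S (ψ ≫ χ) = cm S ψ ≫ cm S χ := (QC S).map_comp ψ χ

lemma cm_id (X : A) : cm S (𝟙 (S.Q.obj X)) = 𝟙 _ := (QC S).map_id _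

lemma cm_Q {X Y : A} (f : X ⟶ Y) : cm S (S.Q.map f) = (uBig S).map f := by
  refine (Functor.congr_hom (QC_fac S) f).trans ?_
  exact (Category.id_comp _).trans (Category.comp_id _)

instance uBig_additive : (uBig S).Additive := inferInstance

lemma cm_add {X Y : A} (ψ χ : S.Q.obj X ⟶ S.Q.obj Y) :
    ∃ θ : S.Q.obj X ⟶ S.Q.obj Y, cm S θ = cm S ψ + cm S χ := by
  obtain ⟨k, rfl, rfl⟩ := padd_exists ψ χ
  refine ⟨k ≫ S.Q.map (biprod.fst + biprod.snd), ?_⟩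
  rw [cm_comp, cm_comp, cm_comp, cm_Q, cm_Q, cm_Q, Functor.map_add, Preadditive.comp_add]

lemma cm_surj {X Y : A} (φ : (uBig S).obj X ⟶ (uBig S).obj Y) :
    ∃ ψ : S.Q.obj X ⟶ S.Q.obj Y, cm S ψ = φ := by
  obtain ⟨z, hz⟩ := Localization.exists_leftFraction (locQ S) (genSubcat (coneSet S)).trW φ
  have hQ : ∀ ⦃X Y : HomotopyCategory A (ComplexShape.up ℤ)⦄ (s : X ⟶ Y),
      (genSubcat (coneSet S)).trW s → IsIso ((locQ S).map s) :=
    fun _ _ s hs => MorphismProperty.Q_inverts _ s hs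
  have hz' : φ ≫ (locQ S).map z.s = (locQ S).map z.f := by
    rw [hz]
    exact MorphismProperty.LeftFraction.map_comp_map_s _ _ _
  obtain ⟨_, _, ⟨P, rfl⟩, ⟨Q, rfl⟩, p, hp, a, b, g, q, hq1, hq2, h⟩ :=
    key (iotaSet A) (coneSet S)
      (by rintro _ ⟨X, rfl⟩ _ ⟨Y, rfl⟩ n hn; exact iota_HV X Y n hn)
      iota_sum iota_zero (cone_ext S) (locQ S) hQ ⟨X, rfl⟩ ⟨Y, rfl⟩ z.f z.s z.hs
  have := hQ _ z.hs
  rw [← hz', cancel_mono] at h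
  obtain ⟨p, rfl⟩ := iotaA.map_surjective p
  obtain ⟨a, rfl⟩ := iotaA.map_surjective a
  obtain ⟨b, rfl⟩ := iotaA.map_surjective b
  obtain ⟨g, rfl⟩ := iotaA.map_surjective g
  have hpi : IsIso (S.Q.map p) := L_iso S S.Q S.Q_inverts p hp
  have hq : cm S (inv (S.Q.map p)) = q := by
    have h1 : cm S (inv (S.Q.map p)) ≫ (uBig S).map p = 𝟙 _ := by
      rw [← cm_Q, ← cm_comp, IsIso.inv_hom_id, cm_id]
    have h2 : (uBig S).map p ≫ q = 𝟙 _ := hq2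
    calc cm S (inv (S.Q.map p)) = cm S (inv (S.Q.map p)) ≫ (uBig S).map p ≫ q := by
          rw [h2, Category.comp_id]
      _ = q := by rw [← Category.assoc, h1]; exact Category.id_comp q
  obtain ⟨θ, hθ⟩ := cm_add S (S.Q.map a) (S.Q.map b ≫ inv (S.Q.map p) ≫ S.Q.map g)
  refine ⟨θ, hθ.trans ?_⟩
  rw [cm_comp, cm_comp, cm_Q, cm_Q, cm_Q, hq, h]
  rfl

lemma QC_GF : QC S ⋙ GF S S.Q S.Q_inverts = 𝟭 _ := by
  apply Localization.Construction.uniq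
  rw [← Functor.assoc, QC_fac, GF_fac]
  rfl

lemma gm_cm {X Y : A} (ψ : S.Q.obj X ⟶ S.Q.obj Y) : gm S S.Q S.Q_inverts (cm S ψ) = ψ := by
  refine (Functor.congr_hom (QC_GF S) ψ).trans ?_
  exact (Category.id_comp _).trans (Category.comp_id _)

lemma cm_gm {X Y : A} (φ : (uBig S).obj X ⟶ (uBig S).obj Y) :
    cm S (gm S S.Q S.Q_inverts φ) = φ := by
  obtain ⟨ψ, rfl⟩ := cm_surj S φ
  rw [gm_cm]

lemma GF_QC : GF S S.Q S.Q_inverts ⋙ QC S = 𝟭 _ := by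
  refine CategoryTheory.Functor.ext (fun X => rfl) ?_
  intro X Y f
  refine (cm_gm S f).trans ?_
  exact ((Category.id_comp _).trans (Category.comp_id _)).symm

end Fin

/-- Corollary: if `S` contains all identities and is closed under direct sums, then the
canonical comparison functor from the Gabriel–Zisman localization `A[S⁻¹]` to
`A[S⁻¹]_add` is an isomorphism of categories. -/
theorem statement1 {A : Type u} [Category.{v} A] [Preadditive A] [HasZeroObject A]
    [HasFiniteBiproducts A] (S : MorphismProperty A)
    (hid : ∀ X : A, S (𝟙 X))
    (hsum : ∀ ⦃X Y X' Y' : A⦄ (s : X ⟶ Y) (s' : X' ⟶ Y'),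
      S s → S s' → S (biprod.map s s')) :
    ∃ Qc : S.Localization ⥤ AddLoc S,
      (S.Q ⋙ Qc = uFun S) ∧
      ∃ G : AddLoc S ⥤ S.Localization,
        Qc ⋙ G = 𝟭 S.Localization ∧ G ⋙ Qc = 𝟭 (AddLoc S) := by
  haveI : SumClosed S := ⟨hid, hsum⟩
  exact ⟨QC S, QC_fac S, GF S S.Q S.Q_inverts, QC_GF S, GF_QC S⟩
end

section
/- Let C be a triangulated category with a weight structure w, let B be a set of objects of C_{[0,1]}, and let 𝔻 be the triangulated subcategory of C generated by B. Let A, A' ∈ C_{w=0}. Then any morphism f : A → A' in the Verdier quotient C/𝔻 can be presented as a composition g ∘ s⁻¹ ∘ i, where A'', T ∈ C_{w=0}, g ∈ C(A'', A'), s ∈ C(A'', A ⊕ T) with Cone(s) an object of 𝔻 (so that s becomes invertible in C/𝔻), and i : A → A ⊕ T is the canonical coretraction. -/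
open CategoryTheory Limits Pretriangulated ZeroObject

universe v u v' u'

section TriangulatedPrelude

variable {C : Type u} [Category.{v} C] [HasZeroObject C] [HasShift C ℤ] [Preadditive C]
  [∀ n : ℤ, (shiftFunctor C n).Additive] [Pretriangulated C]

instance genSubcat_isTriangulated (B : Set C) : (genSubcat B).IsTriangulated where
  exists_zero := ⟨0, isZero_zero _, genSub.zero _ (isZero_zero _)⟩
  isStableUnderShiftBy n := ⟨fun X h => genSub.shift X n h⟩
  ext₂' T hT h₁ h₃ := ObjectProperty.le_isoClosure _ _ (genSub.ext₂ T hT h₁ h₃)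

end TriangulatedPrelude

section WeightStructurePrelude

variable (C : Type u) [Category.{v} C] [HasZeroObject C] [HasShift C ℤ] [Preadditive C]
  [∀ n : ℤ, (shiftFunctor C n).Additive] [Pretriangulated C]

/-- A weight structure on a (pre)triangulated category `C` (homological convention):
two retract-closed classes of objects `LE = C_{w≤0}` and `GE = C_{w≥0}` such that
`C_{w≤0} ⊆ C_{w≤0}[1]`, `C_{w≥0}[1] ⊆ C_{w≥0}`, `Hom(C_{w≤0}, C_{w≥0}[1]) = 0`, and every
object `M` admits a weight decomposition `X ⟶ M ⟶ Y ⟶ X[1]` with `X ∈ C_{w≤0}`,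
`Y ∈ C_{w≥0}[1]`. -/
structure WeightStructure where
  /-- the class `C_{w≤0}` -/
  LE : Set C
  /-- the class `C_{w≥0}` -/
  GE : Set C
  retract_LE : ∀ ⦃X Y : C⦄, Y ∈ LE → ∀ (i : X ⟶ Y) (r : Y ⟶ X), i ≫ r = 𝟙 X → X ∈ LE
  retract_GE : ∀ ⦃X Y : C⦄, Y ∈ GE → ∀ (i : X ⟶ Y) (r : Y ⟶ X), i ≫ r = 𝟙 X → X ∈ GE
  shift_LE : ∀ X ∈ LE, X⟦(-1 : ℤ)⟧ ∈ LE
  shift_GE : ∀ X ∈ GE, X⟦(1 : ℤ)⟧ ∈ GE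
  orthogonality : ∀ X ∈ LE, ∀ Y ∈ GE, ∀ f : X ⟶ (Y⟦(1 : ℤ)⟧), f = 0
  decomposition : ∀ M : C, ∃ (X Y : C) (a : X ⟶ M) (b : M ⟶ Y) (c : Y ⟶ X⟦(1 : ℤ)⟧),
    (Triangle.mk a b c ∈ distTriang C) ∧ X ∈ LE ∧ Y⟦(-1 : ℤ)⟧ ∈ GE

variable {C}

/-- The class `C_{w=0} = C_{w≤0} ∩ C_{w≥0}` of objects of the heart. -/
def WeightStructure.heart (w : WeightStructure C) : Set C := w.LE ∩ w.GE

/-- The class `C_{[0,1]} = C_{w≥0} ∩ C_{w≤1}`. -/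
def WeightStructure.zeroOne (w : WeightStructure C) : Set C :=
  {X | X ∈ w.GE ∧ X⟦(-1 : ℤ)⟧ ∈ w.LE}

end WeightStructurePrelude

section Helpers

open ObjectProperty

variable {C : Type u} [Category.{v} C] [HasZeroObject C] [HasShift C ℤ] [Preadditive C]
  [∀ n : ℤ, (shiftFunctor C n).Additive] [Pretriangulated C]

section Wrappers
variable {X Y Z W : C} {f : X ⟶ Y} {g : Y ⟶ Z} {h : Z ⟶ X⟦(1 : ℤ)⟧}

lemma tri_y2 (hT : Triangle.mk f g h ∈ distTriang C) (k : Y ⟶ W) (hk : f ≫ k = 0) :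
    ∃ l : Z ⟶ W, k = g ≫ l := Triangle.yoneda_exact₂ _ hT k hk

lemma tri_y3 (hT : Triangle.mk f g h ∈ distTriang C) (k : Z ⟶ W) (hk : g ≫ k = 0) :
    ∃ l : X⟦(1 : ℤ)⟧ ⟶ W, k = h ≫ l := Triangle.yoneda_exact₃ _ hT k hk

lemma tri_y1 (hT : Triangle.mk f g h ∈ distTriang C) (k : X⟦(1 : ℤ)⟧ ⟶ W) (hk : h ≫ k = 0) :
    ∃ l : Y⟦(1 : ℤ)⟧ ⟶ W, k = (-f⟦(1:ℤ)⟧') ≫ l :=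
  Triangle.yoneda_exact₂ _ (rot_of_distTriang _ (rot_of_distTriang _ hT)) k hk

lemma tri_c2 (hT : Triangle.mk f g h ∈ distTriang C) (k : W ⟶ Y) (hk : k ≫ g = 0) :
    ∃ l : W ⟶ X, k = l ≫ f := Triangle.coyoneda_exact₂ _ hT k hk

lemma tri_c1 (hT : Triangle.mk f g h ∈ distTriang C) (k : W ⟶ X⟦(1 : ℤ)⟧)
    (hk : k ≫ f⟦(1:ℤ)⟧' = 0) :
    ∃ l : W ⟶ Z, k = l ≫ h := Triangle.coyoneda_exact₁ _ hT k hk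

lemma tri_m1 {X' Y' Z' : C} {f' : X' ⟶ Y'} {g' : Y' ⟶ Z'} {h' : Z' ⟶ X'⟦(1 : ℤ)⟧}
    (hT : Triangle.mk f g h ∈ distTriang C) (hT' : Triangle.mk f' g' h' ∈ distTriang C)
    (b : Y ⟶ Y') (c : Z ⟶ Z') (comm : g ≫ c = b ≫ g') :
    ∃ a : X ⟶ X', f ≫ b = a ≫ f' ∧ h ≫ a⟦(1:ℤ)⟧' = c ≫ h' :=
  complete_distinguished_triangle_morphism₁ _ _ hT hT' b c comm

end Wrappers

def WeightStructure.LN (w : WeightStructure C) (n : ℤ) : ObjectProperty C :=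
  fun X => X⟦-n⟧ ∈ w.LE

def WeightStructure.GN (w : WeightStructure C) (n : ℤ) : ObjectProperty C :=
  fun X => X⟦-n⟧ ∈ w.GE

variable (w : WeightStructure C)

lemma ws_LE_iso {X Y : C} (e : X ≅ Y) (h : X ∈ w.LE) : Y ∈ w.LE :=
  w.retract_LE h e.inv e.hom (by simp)

lemma ws_GE_iso {X Y : C} (e : X ≅ Y) (h : X ∈ w.GE) : Y ∈ w.GE :=
  w.retract_GE h e.inv e.hom (by simp)

lemma ws_LN_zero {X : C} : w.LN 0 X ↔ X ∈ w.LE :=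
  ⟨ws_LE_iso w ((shiftFunctorZero' C (-0 : ℤ) (by simp)).app X),
   ws_LE_iso w ((shiftFunctorZero' C (-0 : ℤ) (by simp)).app X).symm⟩

lemma ws_GN_zero {X : C} : w.GN 0 X ↔ X ∈ w.GE :=
  ⟨ws_GE_iso w ((shiftFunctorZero' C (-0 : ℤ) (by simp)).app X),
   ws_GE_iso w ((shiftFunctorZero' C (-0 : ℤ) (by simp)).app X).symm⟩

lemma ws_LN_shift {X : C} (n k m : ℤ) (h : n + k = m) : w.LN m (X⟦k⟧) ↔ w.LN n X :=
  ⟨ws_LE_iso w ((shiftFunctorAdd' C k (-m) (-n) (by lia)).app X).symm,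
   ws_LE_iso w ((shiftFunctorAdd' C k (-m) (-n) (by lia)).app X)⟩

lemma ws_GN_shift {X : C} (n k m : ℤ) (h : n + k = m) : w.GN m (X⟦k⟧) ↔ w.GN n X :=
  ⟨ws_GE_iso w ((shiftFunctorAdd' C k (-m) (-n) (by lia)).app X).symm,
   ws_GE_iso w ((shiftFunctorAdd' C k (-m) (-n) (by lia)).app X)⟩

lemma ws_orth {X Y : C} {n m : ℤ} (h : n + 1 = m) (hX : w.LN n X) (hY : w.GN m Y)
    (f : X ⟶ Y) : f = 0 := by
  apply (shiftFunctor C (-n)).map_injective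
  have := w.orthogonality _ hX _ hY
    ((shiftFunctor C (-n)).map f ≫ ((shiftFunctorAdd' C (-m) 1 (-n) (by lia)).app Y).hom)
  rw [Functor.map_zero, ← cancel_mono ((shiftFunctorAdd' C (-m) 1 (-n) (by lia)).app Y).hom, this,
    zero_comp]

lemma ws_LN_mono {X : C} {n m : ℤ} (h : n ≤ m) (hX : w.LN n X) : w.LN m X := by
  induction m, h using Int.leInduction with
  | base => exact hX
  | succ m _ ih =>
    exact ws_LE_iso w ((shiftFunctorAdd' C (-m) (-1) (-(m+1)) (by lia)).app X).symm
      (w.shift_LE _ ih)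

lemma ws_GN_mono {X : C} {n m : ℤ} (h : n ≤ m) (hX : w.GN m X) : w.GN n X := by
  induction m, h using Int.leInduction with
  | base => exact hX
  | succ m _ ih =>
    exact ih (ws_GE_iso w ((shiftFunctorAdd' C (-(m+1)) 1 (-m) (by lia)).app X).symm
      (w.shift_GE _ hX))

lemma ws_LN_of {X : C} {n m : ℤ} (h : n + 1 = m)
    (H : ∀ (Y : C), w.GN m Y → ∀ f : X ⟶ Y, f = 0) : w.LN n X := by
  obtain ⟨P, R, a, b, c, hT, hP, hR⟩ := w.decomposition (X⟦-n⟧)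
  have hb : b = 0 := by
    have h1 : w.GN m (R⟦n⟧) := (ws_GN_shift w 1 n m (by lia)).2 hR
    have h2 := H _ h1 (((shiftFunctorCompIsoId C (-n) n (by lia)).app X).inv ≫ b⟦n⟧')
    apply (shiftFunctor C n).map_injective
    rw [← cancel_epi ((shiftFunctorCompIsoId C (-n) n (by lia)).app X).inv, h2]
    simp
  obtain ⟨r, hr⟩ := tri_c2 hT (𝟙 (X⟦-n⟧)) (by simp [hb])
  exact w.retract_LE hP r a hr.symm

lemma ws_GN_of {X : C} {n m : ℤ} (h : n + 1 = m)
    (H : ∀ (Y : C), w.LN n Y → ∀ f : Y ⟶ X, f = 0) : w.GN m X := by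
  obtain ⟨P, R, a, b, c, hT, hP, hR⟩ := w.decomposition (X⟦-n⟧)
  have ha : a = 0 := by
    have h1 : w.LN n (P⟦n⟧) := (ws_LN_shift w 0 n n (by lia)).2 ((ws_LN_zero w).2 hP)
    have h2 := H _ h1 (a⟦n⟧' ≫ ((shiftFunctorCompIsoId C (-n) n (by lia)).app X).hom)
    apply (shiftFunctor C n).map_injective
    rw [← cancel_mono ((shiftFunctorCompIsoId C (-n) n (by lia)).app X).hom, h2]
    simp
  obtain ⟨r, hr⟩ := tri_y2 hT (𝟙 (X⟦-n⟧)) (by simp [ha])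
  have h3 : w.GN 1 (X⟦-n⟧) := w.retract_GE hR (b⟦(-1:ℤ)⟧') (r⟦(-1:ℤ)⟧') (by
    rw [← Functor.map_comp, ← hr, CategoryTheory.Functor.map_id])
  exact (ws_GN_shift w m (-n) 1 (by lia)).1 h3

lemma ws_LN_ext (n : ℤ) (T : Triangle C) (hT : T ∈ distTriang C) (h₁ : w.LN n T.obj₁)
    (h₃ : w.LN n T.obj₃) : w.LN n T.obj₂ := by
  refine ws_LN_of w rfl (fun Y hY f => ?_)
  obtain ⟨g, rfl⟩ := Triangle.yoneda_exact₂ _ hT f (ws_orth w rfl h₁ hY _)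
  rw [ws_orth w rfl h₃ hY g, comp_zero]

lemma ws_GN_ext (n : ℤ) (T : Triangle C) (hT : T ∈ distTriang C) (h₁ : w.GN n T.obj₁)
    (h₃ : w.GN n T.obj₃) : w.GN n T.obj₂ := by
  have e : n - 1 + 1 = n := by lia
  refine ws_GN_of w e (fun Y hY f => ?_)
  obtain ⟨g, rfl⟩ := Triangle.coyoneda_exact₂ _ hT f (ws_orth w e hY h₃ _)
  rw [ws_orth w e hY h₁ g, zero_comp]

lemma ws_LN_isZero (n : ℤ) {X : C} (hX : IsZero X) : w.LN n X :=
  ws_LN_of w rfl (fun _ _ _ => hX.eq_of_src _ _)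

lemma ws_GN_isZero (n : ℤ) {X : C} (hX : IsZero X) : w.GN n X :=
  ws_GN_of w (n := n - 1) (by lia) (fun _ _ _ => hX.eq_of_tgt _ _)

variable (B : Set C)

def wsL (n : ℤ) : ObjectProperty C := fun X => genSub B X ∧ w.LN n X

def wsR (n : ℤ) : ObjectProperty C := fun X => genSub B X ∧ w.GN n X

lemma wsL_ext (n : ℤ) : extensionProduct (wsL w B n) (wsL w B n) ≤ wsL w B n := by
  intro Z hZ
  rw [extensionProduct_iff] at hZ
  obtain ⟨X, Y, f, g, h, hT, hX, hY⟩ := hZ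
  exact ⟨genSub.ext₂ _ hT hX.1 hY.1, ws_LN_ext w n _ hT hX.2 hY.2⟩

lemma wsR_ext (n : ℤ) : extensionProduct (wsR w B n) (wsR w B n) ≤ wsR w B n := by
  intro Z hZ
  rw [extensionProduct_iff] at hZ
  obtain ⟨X, Y, f, g, h, hT, hX, hY⟩ := hZ
  exact ⟨genSub.ext₂ _ hT hX.1 hY.1, ws_GN_ext w n _ hT hX.2 hY.2⟩

lemma ws_swap (n : ℤ) : extensionProduct (wsR w B n) (wsL w B n) ≤
    extensionProduct (wsL w B n) (wsR w B n) := by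
  intro Z hZ
  rw [extensionProduct_iff] at hZ
  obtain ⟨X, Y, f, g, h, hT, hX, hY⟩ := hZ
  have h0 : h = 0 := ws_orth w rfl hY.2 ((ws_GN_shift w n 1 (n+1) rfl).2 hX.2) h
  obtain ⟨e, he₁, he₂⟩ := exists_iso_binaryBiproduct_of_distTriang _ hT h0
  have key : extensionProduct (wsL w B n) (wsR w B n) (Y ⊞ X) := by
    rw [extensionProduct_iff]
    exact ⟨Y, X, _, _, _, binaryBiproductTriangle_distinguished Y X, hY, hX⟩
  exact (extensionProduct (wsL w B n) (wsR w B n)).prop_of_iso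
    ((biprod.braiding Y X) ≪≫ e.symm) key

variable [IsTriangulated C]

lemma wsP_ext (n : ℤ) :
    extensionProduct (extensionProduct (wsL w B n) (wsR w B n))
      (extensionProduct (wsL w B n) (wsR w B n)) ≤
    extensionProduct (wsL w B n) (wsR w B n) := by
  rw [extensionProduct_assoc, ← extensionProduct_assoc (wsR w B n)]
  refine (monotone_extensionProduct_right _
    (monotone_extensionProduct_left _ (ws_swap w B n))).trans ?_
  rw [extensionProduct_assoc, ← extensionProduct_assoc]
  exact (monotone_extensionProduct_left _ (wsL_ext w B n)).trans
    (monotone_extensionProduct_right _ (wsR_ext w B n))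

variable {B}

lemma ws_decomp (hB : B ⊆ w.zeroOne) {Z : C} (hZ : genSub B Z) (k n : ℤ) :
    extensionProduct (wsL w B n) (wsR w B n) (Z⟦k⟧) := by
  have : (wsL w B n).ContainsZero :=
    ⟨0, isZero_zero C, genSub.zero _ (isZero_zero C), ws_LN_isZero w n (isZero_zero C)⟩
  have : (wsR w B n).ContainsZero :=
    ⟨0, isZero_zero C, genSub.zero _ (isZero_zero C), ws_GN_isZero w n (isZero_zero C)⟩
  induction hZ generalizing k with
  | of X hX =>
    obtain ⟨h1, h2⟩ := hB hX
    by_cases hk : k + 1 ≤ n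
    · apply le_extensionProduct_left
      exact ⟨genSub.shift _ _ (genSub.of _ hX),
        ws_LN_mono w hk ((ws_LN_shift w 1 k (k+1) (by lia)).2 h2)⟩
    · apply le_extensionProduct_right
      exact ⟨genSub.shift _ _ (genSub.of _ hX),
        ws_GN_mono w (by lia : n ≤ k)
          ((ws_GN_shift w 0 k k (by lia)).2 ((ws_GN_zero w).2 h1))⟩
  | zero X hX =>
    apply le_extensionProduct_left
    exact ⟨genSub.shift _ _ (genSub.zero _ hX),
      ws_LN_isZero w n ((shiftFunctor C k).map_isZero hX)⟩
  | shift X j hX ih =>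
    exact (extensionProduct (wsL w B n) (wsR w B n)).prop_of_iso
      ((shiftFunctorAdd C j k).app X) (ih (j + k))
  | ext₂ T hT h₁ h₃ ih₁ ih₃ =>
    apply wsP_ext
    rw [extensionProduct_iff]
    exact ⟨_, _, _, _, _, Triangle.shift_distinguished _ hT k, ih₁ k, ih₃ k⟩

lemma ws_decomp' (hB : B ⊆ w.zeroOne) {Z : C} (hZ : genSub B Z) (n : ℤ) :
    ∃ (X Y : C) (a : X ⟶ Z) (b : Z ⟶ Y) (c : Y ⟶ X⟦(1 : ℤ)⟧),
      (Triangle.mk a b c ∈ distTriang C) ∧ genSub B X ∧ genSub B Y ∧ w.LN n X ∧ w.GN n Y := by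
  have := (extensionProduct (wsL w B n) (wsR w B n)).prop_of_iso
      ((shiftFunctorZero C ℤ).app Z) (ws_decomp w hB hZ 0 n)
  obtain ⟨X, Y, a, b, c, hT, hX, hY⟩ := (extensionProduct_iff _ _ _).1 this
  exact ⟨X, Y, a, b, c, hT, hX.1, hY.1, hX.2, hY.2⟩

/-- The heart of the argument, without the localization. -/
lemma ws_main [HasBinaryBiproducts C] (hB : B ⊆ w.zeroOne)
    (A A' : C) (hA : A ∈ w.heart) (hA' : A' ∈ w.heart)
    {M Z : C} (m : M ⟶ A) (z : A ⟶ Z) (d : Z ⟶ M⟦(1 : ℤ)⟧)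
    (hT : Triangle.mk m z d ∈ distTriang C) (hZ : genSub B Z) (hZ1 : w.LN 1 Z) (g : M ⟶ A') :
    ∃ (A'' T : C), A'' ∈ w.heart ∧ T ∈ w.heart ∧
      ∃ (g' : A'' ⟶ A') (s : A'' ⟶ A ⊞ T) (u : M ⟶ A''),
        (∃ (Z : C) (a : (A ⊞ T : C) ⟶ Z) (b : Z ⟶ A''⟦(1 : ℤ)⟧),
          (Triangle.mk s a b ∈ distTriang C) ∧ genSub B Z) ∧
        u ≫ s = m ≫ biprod.inl ∧ u ≫ g' = g := by
  obtain ⟨X, Y, a, q, c, hXY, hXB, hYB, hX, hY⟩ := ws_decomp' w hB hZ 0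
  have hY1 : w.LN 1 Y := ws_LN_ext w 1 _ (rot_of_distTriang _ hXY) hZ1
    ((ws_LN_shift w 0 1 1 (by lia)).2 hX)
  obtain ⟨T, R, t, b, c', hTR, hTL, hR⟩ := w.decomposition Y
  have hTL' := (ws_LN_zero w).2 hTL
  have hR' : w.GN 1 R := hR
  have hTG' : w.GN 0 T := ws_GN_ext w 0 _ (inv_rot_of_distTriang _ hTR)
    ((ws_GN_shift w 1 (-1) 0 (by lia)).2 hR') hY
  have hAL := (ws_LN_zero w).2 hA.1
  have hAG := (ws_GN_zero w).2 hA.2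
  have hA'G := (ws_GN_zero w).2 hA'.2
  have hATL : w.LN 0 (A ⊞ T) := ws_LN_ext w 0 _ (binaryBiproductTriangle_distinguished A T)
    hAL hTL'
  have hATG : w.GN 0 (A ⊞ T) := ws_GN_ext w 0 _ (binaryBiproductTriangle_distinguished A T)
    hAG hTG'
  obtain ⟨A'', s, δ, hs⟩ := distinguished_cocone_triangle₁ (biprod.desc (z ≫ q) t)
  have hL : w.LN 0 A'' := ws_LN_ext w 0 _ (inv_rot_of_distTriang _ hs)
    ((ws_LN_shift w 1 (-1) 0 (by lia)).2 hY1) hATL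
  have hG : w.GN 0 A'' := by
    rw [← ws_GN_shift w 0 1 1 (by lia)]
    refine ws_GN_of w (n := 0) (by lia) (fun W hW h => ?_)
    obtain ⟨k, hk⟩ := tri_c1 hs h
      (ws_orth w (n := 0) (by lia) hW ((ws_GN_shift w 0 1 1 (by lia)).2 hATG) _)
    obtain ⟨k', hk'⟩ := tri_c2 hTR k (ws_orth w (n := 0) (by lia) hW hR' _)
    have h0 : biprod.desc (z ≫ q) t ≫ δ = 0 := comp_distTriang_mor_zero₂₃ _ hs
    have ht : t = biprod.inr ≫ biprod.desc (z ≫ q) t := by simp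
    have h1 : t ≫ δ = 0 := by rw [ht, Category.assoc, h0, comp_zero]
    rw [hk, hk', Category.assoc, h1, comp_zero]
  obtain ⟨u, hu1, hu2⟩ := tri_m1 hT hs
    (biprod.inl : A ⟶ A ⊞ T) q (by simp)
  have hA'1 : w.GN 1 (A'⟦(1:ℤ)⟧) := (ws_GN_shift w 0 1 1 (by lia)).2 hA'G
  obtain ⟨r, hr⟩ := tri_y2 hXY (d ≫ g⟦(1:ℤ)⟧')
    (ws_orth w (n := 0) (by lia) hX hA'1 _)
  obtain ⟨r', hr'⟩ := tri_y3 hs r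
    (ws_orth w (n := 0) (by lia) hATL hA'1 _)
  obtain ⟨g1, rfl⟩ := (shiftFunctor C (1:ℤ)).map_surjective r'
  have h2 : d ≫ (g - u ≫ g1)⟦(1:ℤ)⟧' = 0 := by
    rw [Functor.map_sub, Preadditive.comp_sub, hr, hr', Functor.map_comp, ← Category.assoc d,
      hu2, Category.assoc, sub_self]
  obtain ⟨h', hh'⟩ := tri_y1 hT ((g - u ≫ g1)⟦(1:ℤ)⟧') h2
  obtain ⟨h, rfl⟩ := (shiftFunctor C (1:ℤ)).map_surjective h'
  have h3 : g - u ≫ g1 = m ≫ (-h) := by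
    apply (shiftFunctor C (1:ℤ)).map_injective
    rw [hh']
    simp
  refine ⟨A'', T, ⟨(ws_LN_zero w).1 hL, (ws_GN_zero w).1 hG⟩, ⟨hTL, (ws_GN_zero w).1 hTG'⟩,
    g1 + s ≫ biprod.fst ≫ (-h), s, u, ⟨Y, _, δ, hs, hYB⟩, hu1.symm, ?_⟩
  have h4 : u ≫ s ≫ biprod.fst ≫ (-h) = m ≫ (-h) := by
    rw [← Category.assoc, ← hu1]
    simp
  rw [Preadditive.comp_add, h4, ← h3]
  abel

end Helpers

/-- Proposition: in the Verdier quotient of `C` by the subcategory generated by a set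
`B ⊆ C_{[0,1]}`, every morphism between images of objects of the heart can be presented
as `g ∘ s⁻¹ ∘ i` with `i` the canonical coretraction `A ⟶ A ⊕ T`. -/
theorem statement16 {C : Type u} [Category.{v} C] [HasZeroObject C] [HasShift C ℤ]
    [Preadditive C] [∀ n : ℤ, (shiftFunctor C n).Additive] [Pretriangulated C]
    [IsTriangulated C] [HasBinaryBiproducts C]
    (w : WeightStructure C) (B : Set C) (hB : B ⊆ w.zeroOne)
    (A A' : C) (hA : A ∈ w.heart) (hA' : A' ∈ w.heart)
    (f : (genSubcat B).trW.Q.obj A ⟶ (genSubcat B).trW.Q.obj A') :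
    ∃ (A'' T : C), A'' ∈ w.heart ∧ T ∈ w.heart ∧
      ∃ (g : A'' ⟶ A') (s : A'' ⟶ A ⊞ T),
        (∃ (Z : C) (a : (A ⊞ T : C) ⟶ Z) (b : Z ⟶ A''⟦(1 : ℤ)⟧),
          (Triangle.mk s a b ∈ distTriang C) ∧ genSub B Z) ∧
        IsIso ((genSubcat B).trW.Q.map s) ∧
        ∃ e : (genSubcat B).trW.Q.obj (A ⊞ T) ⟶ (genSubcat B).trW.Q.obj A',
          (genSubcat B).trW.Q.map s ≫ e = (genSubcat B).trW.Q.map g ∧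
          f = (genSubcat B).trW.Q.map (biprod.inl : A ⟶ A ⊞ T) ≫ e := by
  obtain ⟨φ, hφ⟩ := Localization.exists_rightFraction (genSubcat B).trW.Q (genSubcat B).trW f
  obtain ⟨m₀, hm₀, g₀⟩ := φ
  obtain ⟨Z, z, d, hT, hZ⟩ := ((genSubcat B).trW_iff m₀).1 hm₀
  obtain ⟨X, Y, a, b, c, hXY, hXB, hYB, hX, hY⟩ := ws_decomp' w hB hZ 1
  obtain ⟨x, hx⟩ := tri_c2 hXY z
    (ws_orth w (n := 0) (by lia) ((ws_LN_zero w).2 hA.1) hY _)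
  obtain ⟨M, m, d', hM⟩ := distinguished_cocone_triangle₁ x
  obtain ⟨v, hv1, hv2⟩ := tri_m1 hM hT
    (𝟙 A) a (by simpa using hx.symm)
  obtain ⟨A'', T, hA'', hT', g', s, u, ⟨Z', p, δ, hs, hZ'⟩, hu, hg⟩ :=
    ws_main w hB A A' hA hA' m x d' hM hXB hX (v ≫ g₀)
  have iso_s : IsIso ((genSubcat B).trW.Q.map s) :=
    Localization.inverts (genSubcat B).trW.Q (genSubcat B).trW s
      (((genSubcat B).trW_iff s).2 ⟨Z', p, δ, hs, hZ'⟩)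
  have iso_m : IsIso ((genSubcat B).trW.Q.map m) :=
    Localization.inverts (genSubcat B).trW.Q (genSubcat B).trW m
      (((genSubcat B).trW_iff m).2 ⟨X, x, d', hM, hXB⟩)
  refine ⟨A'', T, hA'', hT', g', s, ⟨Z', p, δ, hs, hZ'⟩, iso_s,
    inv ((genSubcat B).trW.Q.map s) ≫ (genSubcat B).trW.Q.map g', by simp, ?_⟩
  have e1 : (genSubcat B).trW.Q.map m₀ ≫ f = (genSubcat B).trW.Q.map g₀ := by
    rw [hφ]
    simp [MorphismProperty.RightFraction.map]
  have e2 : m = v ≫ m₀ := by simpa using hv1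
  rw [← cancel_epi ((genSubcat B).trW.Q.map m), ← Category.assoc _ _ (inv _ ≫ _),
    ← Functor.map_comp, ← hu, Functor.map_comp, Category.assoc, IsIso.hom_inv_id_assoc,
    ← Functor.map_comp, hg, e2, Functor.map_comp, Category.assoc, e1, Functor.map_comp]
end
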